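/- arXiv:2407.01341 — 2 statements merged into one kernel-verified Lean document; each statement's English description precedes it below -/
import Mathlib

section
/- For every ψ ∈ 𝒜(I_π) it holds λ₁(I_π, 2ψ') ≥ 4. In particular, equality occurs when ψ(x) = tan x, in which case an eigenfunction is cos²x. -/
open MeasureTheory Real Set Filter
open scoped ENNReal

noncomputable section

/-- Test class for the Dirichlet eigenvalue with measure potential on `(a,b)`:
`C¹` functions vanishing outside the open interval (a core of `H¹₀`). -/
def TestFun (a b : ℝ) (v : ℝ → ℝ) : Prop :=
  ContDiff ℝ 1 v ∧ ∀ x ∉ Ioo a b, v x = 0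

/-- Rayleigh quotient for the Dirichlet eigenvalue with (nonnegative, possibly infinite)
measure potential `q` on the interval `(a,b)`. -/
def dirRQ (a b : ℝ) (q : Measure ℝ) (v : ℝ → ℝ) : ℝ≥0∞ :=
  ((∫⁻ x in Ioo a b, ENNReal.ofReal ((deriv v x) ^ 2)) +
      ∫⁻ x in Ioo a b, ENNReal.ofReal ((v x) ^ 2) ∂q) /
    ∫⁻ x in Ioo a b, ENNReal.ofReal ((v x) ^ 2)

/-- `λ₁((a,b), q)`, the first Dirichlet eigenvalue with measure potential `q`. -/
def lam1 (a b : ℝ) (q : Measure ℝ) : ℝ≥0∞ :=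
  ⨅ (v : ℝ → ℝ)
    (_ : TestFun a b v ∧ (∫⁻ x in Ioo a b, ENNReal.ofReal ((v x) ^ 2)) ≠ 0),
    dirRQ a b q v

/-- The class `𝒜(I_π)`: an increasing function `psi` with finiteness domain `dom ⊆ I_π`
(an interval), satisfying the improved-monotonicity gap condition, together with the
measure `nu` representing its distributional derivative `ψ'` on `dom`. -/
structure PsiA where
  dom : Set ℝ
  domSub : dom ⊆ Ioo (-(π / 2)) (π / 2)
  domConn : dom.OrdConnected
  psi : ℝ → ℝ
  mono : MonotoneOn psi dom
  gap : ∀ ⦃x⦄, x ∈ dom → ∀ ⦃y⦄, y ∈ dom → x < y →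
    2 * tan ((y - x) / 2) ≤ psi y - psi x
  nu : Measure ℝ
  nu_eq : ∀ ⦃x⦄, x ∈ dom → ∀ ⦃y⦄, y ∈ dom → x ≤ y →
    nu (Ioc x y) = ENNReal.ofReal (psi y - psi x)

/-- The measure `ψ'`, extended by `+∞` on `I_π \ dom ψ`. -/
def PsiA.derivM (P : PsiA) : Measure ℝ :=
  P.nu.restrict P.dom + (∞ : ℝ≥0∞) • volume.restrict (Ioo (-(π / 2)) (π / 2) \ P.dom)

/-- The measure `ψ² dx`, extended by `+∞` on `I_π \ dom ψ`. -/
def PsiA.sqM (P : PsiA) : Measure ℝ :=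
  (volume.restrict P.dom).withDensity (fun x => ENNReal.ofReal ((P.psi x) ^ 2)) +
    (∞ : ℝ≥0∞) • volume.restrict (Ioo (-(π / 2)) (π / 2) \ P.dom)

/-- The measure `q = ψ' + ψ²`, extended by `+∞` on `I_π \ dom ψ`. -/
def PsiA.qM (P : PsiA) : Measure ℝ :=
  P.nu.restrict P.dom +
    (volume.restrict P.dom).withDensity (fun x => ENNReal.ofReal ((P.psi x) ^ 2)) +
    (∞ : ℝ≥0∞) • volume.restrict (Ioo (-(π / 2)) (π / 2) \ P.dom)

/-- The function `cos² x` on `I_π`, extended by zero. -/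
def cosSq : ℝ → ℝ := fun x => if x ∈ Ioo (-(π / 2)) (π / 2) then cos x ^ 2 else 0

/-- The measure with density `1 + 2 tan² x` on `I_π`. -/
def tanWeight : Measure ℝ :=
  (volume.restrict (Ioo (-(π / 2)) (π / 2))).withDensity
    fun x => ENNReal.ofReal (1 + 2 * tan x ^ 2)

lemma tan_tangent {a h : ℝ} (ha : 0 ≤ a) (hh : 0 ≤ h) (hah : a + h < π / 2) :
    tan a + (1 + tan a ^ 2) * tan h ≤ tan (a + h) := by
  have hpi := Real.pi_pos
  have ca : 0 < cos a := cos_pos_of_mem_Ioo ⟨by linarith, by linarith⟩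
  have ch : 0 < cos h := cos_pos_of_mem_Ioo ⟨by linarith, by linarith⟩
  have cah : 0 < cos (a + h) := cos_pos_of_mem_Ioo ⟨by linarith, by linarith⟩
  have hA : 0 ≤ tan a := tan_nonneg_of_nonneg_of_le_pi_div_two ha (by linarith)
  have hT : 0 ≤ tan h := tan_nonneg_of_nonneg_of_le_pi_div_two hh (by linarith)
  have h1 : cos (a + h) = cos a * cos h * (1 - tan a * tan h) := by
    rw [cos_add, tan_eq_sin_div_cos, tan_eq_sin_div_cos]; field_simp
  have h2 : 0 < 1 - tan a * tan h := by
    by_contra hc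
    push Not at hc
    have : cos (a + h) ≤ 0 := by
      rw [h1]; exact mul_nonpos_of_nonneg_of_nonpos (by positivity) hc
    linarith
  have h3 : tan (a + h) = (tan a + tan h) / (1 - tan a * tan h) := by
    rw [tan_eq_sin_div_cos (a + h), h1, sin_add]
    rw [div_eq_div_iff (by positivity) h2.ne', tan_eq_sin_div_cos, tan_eq_sin_div_cos]; field_simp
  rw [h3, le_div_iff₀ h2]
  nlinarith [mul_nonneg hA (sq_nonneg (tan h)), mul_nonneg (mul_nonneg hA (sq_nonneg (tan h))) (sq_nonneg (tan a))]

lemma tan_tangent' {a h : ℝ} (ha : 0 ≤ a) (hh : 0 ≤ h) (hah : a + h < π / 2) :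
    tan a + (1 + tan a ^ 2) * h ≤ tan (a + h) := by
  have := tan_tangent ha hh hah
  have h2 : h ≤ tan h := le_tan hh (by linarith)
  nlinarith [sq_nonneg (tan a)]

lemma tan_superadd {a h : ℝ} (ha : 0 ≤ a) (hh : 0 ≤ h) (hah : a + h < π / 2) :
    tan a + tan h ≤ tan (a + h) := by
  have := tan_tangent ha hh hah
  have h2 : 0 ≤ tan h := tan_nonneg_of_nonneg_of_le_pi_div_two hh (by linarith)
  nlinarith [sq_nonneg (tan a)]

lemma tan_sum_le {ι : Type*} (F : Finset ι) (l : ι → ℝ) (hl : ∀ i, 0 ≤ l i)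
    (hF : ∑ i ∈ F, l i < π) : ∑ i ∈ F, tan (l i / 2) ≤ tan ((∑ i ∈ F, l i) / 2) := by
  classical
  induction F using Finset.induction_on with
  | empty => simp
  | insert i F hi ih =>
    rw [Finset.sum_insert hi] at hF ⊢
    rw [Finset.sum_insert hi]
    have h0 : 0 ≤ ∑ i ∈ F, l i := Finset.sum_nonneg fun i _ => hl i
    have := ih (by linarith [hl i])
    have h2 := tan_superadd (a := l i / 2) (h := (∑ i ∈ F, l i) / 2) (by linarith [hl i])
      (by linarith) (by linarith)
    rw [add_div]; linarith

lemma open_components (U : Set ℝ) (hU : IsOpen U) (x y : ℝ) (hxy : U ⊆ Ioo x y) :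
    ∃ (ι : Type) (_ : Countable ι) (p q : ι → ℝ), (∀ i, p i < q i) ∧
      Pairwise (fun i j => Disjoint (Ioo (p i) (q i)) (Ioo (p j) (q j))) ∧
      (U = ⋃ i, Ioo (p i) (q i)) ∧ ∀ i, p i ∉ U ∧ q i ∉ U := by
  let 𝒞 : Set (Set ℝ) := (fun z => connectedComponentIn U z) '' U
  have hdisj : 𝒞.PairwiseDisjoint id := by
    rintro _ ⟨z, hz, rfl⟩ _ ⟨w, hw, rfl⟩ hne
    rw [Function.onFun, Set.disjoint_left]
    intro t ht1 ht2
    exact hne ((connectedComponentIn_eq ht1).trans (connectedComponentIn_eq ht2).symm)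
  have hcount : 𝒞.Countable := by
    refine hdisj.countable_of_isOpen ?_ ?_
    · rintro _ ⟨z, hz, rfl⟩; exact hU.connectedComponentIn
    · rintro _ ⟨z, hz, rfl⟩; exact ⟨z, mem_connectedComponentIn hz⟩
  have key : ∀ C ∈ 𝒞, ∃ p q : ℝ, p < q ∧ C = Ioo p q ∧ p ∉ U ∧ q ∉ U := by
    rintro _ ⟨z, hz, rfl⟩
    set C := connectedComponentIn U z with hC
    have hzC : z ∈ C := mem_connectedComponentIn hz
    have hCo : IsOpen C := hU.connectedComponentIn
    have hCU : C ⊆ U := connectedComponentIn_subset _ _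
    have hconn : IsConnected C := ⟨⟨z, hzC⟩, isPreconnected_connectedComponentIn⟩
    have hb : BddBelow C := ⟨x, fun t ht => (hxy (hCU ht)).1.le⟩
    have ha : BddAbove C := ⟨y, fun t ht => (hxy (hCU ht)).2.le⟩
    have hsub := hconn.Ioo_csInf_csSup_subset hb ha
    have hp : sInf C ∉ C := by
      intro h
      obtain ⟨ε, hε, hball⟩ := Metric.isOpen_iff.1 hCo _ h
      have : sInf C - ε / 2 ∈ C := hball (by simp [abs_of_pos hε]; linarith)
      linarith [csInf_le hb this]
    have hq : sSup C ∉ C := by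
      intro h
      obtain ⟨ε, hε, hball⟩ := Metric.isOpen_iff.1 hCo _ h
      have : sSup C + ε / 2 ∈ C := hball (by simp [abs_of_pos hε]; linarith)
      linarith [le_csSup ha this]
    have heq : C = Ioo (sInf C) (sSup C) := by
      refine Subset.antisymm (fun t ht => ⟨?_, ?_⟩) hsub
      · exact lt_of_le_of_ne (csInf_le hb ht) (fun h => hp (h ▸ ht))
      · exact lt_of_le_of_ne (le_csSup ha ht) (fun h => hq (h ▸ ht))
    have hz2 : z ∈ Ioo (sInf C) (sSup C) := heq ▸ hzC
    refine ⟨sInf C, sSup C, hz2.1.trans hz2.2, heq, ?_, ?_⟩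
    · intro h
      apply hp
      have hs : Ico (sInf C) (sSup C) ⊆ U := by
        intro t ht
        rcases eq_or_lt_of_le ht.1 with h1 | h1
        · exact h1 ▸ h
        · exact hCU (hsub ⟨h1, ht.2⟩)
      exact (isPreconnected_Ico.subset_connectedComponentIn (x := z) ⟨hz2.1.le, hz2.2⟩ hs)
        ⟨le_rfl, hz2.1.trans hz2.2⟩
    · intro h
      apply hq
      have hs : Ioc (sInf C) (sSup C) ⊆ U := by
        intro t ht
        rcases eq_or_lt_of_le ht.2 with h1 | h1
        · exact h1 ▸ h
        · exact hCU (hsub ⟨ht.1, h1⟩)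
      exact (isPreconnected_Ioc.subset_connectedComponentIn (x := z) ⟨hz2.1, hz2.2.le⟩ hs)
        ⟨hz2.1.trans hz2.2, le_rfl⟩
  choose! p q hpq hC hp hq using key
  refine ⟨𝒞, hcount.to_subtype, fun C => p C, fun C => q C, fun C => hpq C C.2, ?_, ?_,
    fun C => ⟨hp C C.2, hq C C.2⟩⟩
  · intro C D hne
    have := hdisj C.2 D.2 (fun h => hne (Subtype.ext h))
    simp only [Function.onFun, id] at this
    rw [hC C C.2, hC D D.2] at this
    exact this
  · ext t
    simp only [mem_iUnion]
    constructor
    · intro ht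
      refine ⟨⟨_, t, ht, rfl⟩, ?_⟩
      rw [← hC _ ⟨t, ht, rfl⟩]
      exact mem_connectedComponentIn ht
    · rintro ⟨C, hCt⟩
      rw [← hC C C.2] at hCt
      obtain ⟨z, hz, hzC⟩ := C.2
      rw [← hzC] at hCt
      exact connectedComponentIn_subset _ _ hCt

lemma crossing {v : ℝ → ℝ} (hv : Continuous v) {x z s s' : ℝ} (hxz : x < z) (hss : s < s')
    (hx : v x ≤ s) (hz : s' ≤ v z) :
    ∃ p q, x ≤ p ∧ p < q ∧ q ≤ z ∧ v p ≤ s ∧ s' ≤ v q ∧ ∀ t ∈ Ioo p q, s < v t ∧ v t < s' := by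
  have hK1 : IsCompact (Icc x z ∩ {t | v t ≤ s}) :=
    isCompact_Icc.inter_right (isClosed_le hv continuous_const)
  obtain ⟨p, ⟨hp1, hp2⟩, hp3⟩ := hK1.exists_isGreatest ⟨x, ⟨le_rfl, hxz.le⟩, hx⟩
  have hK2 : IsCompact (Icc p z ∩ {t | s' ≤ v t}) :=
    isCompact_Icc.inter_right (isClosed_le continuous_const hv)
  obtain ⟨q, ⟨hq1, hq2⟩, hq3⟩ := hK2.exists_isLeast ⟨z, ⟨hp1.2, le_rfl⟩, hz⟩
  change v p ≤ s at hp2; change s' ≤ v q at hq2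
  have hpq : p < q := lt_of_le_of_ne hq1.1 (fun h => by rw [h] at hp2; linarith)
  refine ⟨p, q, hp1.1, hpq, hq1.2, hp2, hq2, fun t ht => ⟨?_, ?_⟩⟩
  · by_contra hc
    push Not at hc
    linarith [hp3 ⟨⟨hp1.1.trans ht.1.le, ht.2.le.trans hq1.2⟩, hc⟩, ht.1]
  · by_contra hc
    push Not at hc
    linarith [hq3 ⟨⟨ht.1.le, ht.2.le.trans hq1.2⟩, hc⟩, ht.2]

lemma var_lower {v : ℝ → ℝ} (hv : ContDiff ℝ 1 v) {p q : ℝ} (hpq : p < q) :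
    |v q - v p| ≤ ∫ t in Ioo p q, |deriv v t| := by
  have hc : Continuous (deriv v) := hv.continuous_deriv le_rfl
  have h1 : ∫ t in p..q, deriv v t = v q - v p :=
    intervalIntegral.integral_deriv_eq_sub (fun t _ => hv.differentiable (by norm_num) t)
      (hc.intervalIntegrable _ _)
  rw [← h1, ← integral_Ioc_eq_integral_Ioo, ← intervalIntegral.integral_of_le hpq.le]
  exact intervalIntegral.abs_integral_le_integral_abs hpq.le

lemma energy_lower {v : ℝ → ℝ} (hv : ContDiff ℝ 1 v) {x y z s s' κ : ℝ} (hxz : x < z) (hzy : z < y)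
    (hss : s < s') (hx : v x ≤ s) (hz : s' ≤ v z) (hy : v y ≤ s) (hκ : 0 ≤ κ) :
    ENNReal.ofReal (4 * κ * (s' - s) - κ ^ 2 * volume.real (Ioo x y ∩ {t | s < v t ∧ v t ≤ s'})) ≤
      ∫⁻ t in Ioo x y ∩ {t | s < v t ∧ v t ≤ s'}, ENNReal.ofReal ((deriv v t) ^ 2) := by
  have hc : Continuous (deriv v) := hv.continuous_deriv le_rfl
  have hvc : Continuous v := hv.continuous
  set S := Ioo x y ∩ {t | s < v t ∧ v t ≤ s'} with hS
  have hSm : MeasurableSet S := measurableSet_Ioo.inter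
    ((measurableSet_lt measurable_const hvc.measurable).inter
      (measurableSet_le hvc.measurable measurable_const))
  have hint : ∀ f : ℝ → ℝ, Continuous f → IntegrableOn f S := fun f hf =>
    (hf.integrableOn_Icc (a := x) (b := y)).mono_set (inter_subset_left.trans Ioo_subset_Icc_self)
  have hSfin : volume S ≠ ∞ := ne_top_of_le_ne_top (by simp) (measure_mono (inter_subset_left : S ⊆ Ioo x y))
  obtain ⟨p, q, h1, h2, h3, h4, h5, h6⟩ := crossing hvc hxz hss hx hz
  obtain ⟨p', q', k1, k2, k3, k4, k5, k6⟩ := crossing (v := fun t => v (-t)) (by fun_prop)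
    (neg_lt_neg hzy) hss (by simpa using hy) (by simpa using hz)
  have hvar1 := var_lower hv h2
  have hvar2 := var_lower hv (neg_lt_neg k2)
  have hsub1 : Ioo p q ⊆ S := fun t ht =>
    ⟨⟨by linarith [ht.1], by linarith [ht.2]⟩, (h6 t ht).1, (h6 t ht).2.le⟩
  have hsub2 : Ioo (-q') (-p') ⊆ S := fun t ht => by
    have := k6 (-t) ⟨by linarith [ht.2], by linarith [ht.1]⟩
    simp only [neg_neg] at this
    exact ⟨⟨by linarith [ht.1], by linarith [ht.2]⟩, this.1, this.2.le⟩
  have hdisj : Disjoint (Ioo p q) (Ioo (-q') (-p')) := by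
    rw [Set.disjoint_left]; intro t ht ht'; linarith [ht.2, ht'.1]
  have hTV : 2 * (s' - s) ≤ ∫ t in S, |deriv v t| := by
    have e1 : ∫ t in Ioo p q ∪ Ioo (-q') (-p'), |deriv v t| ≤ ∫ t in S, |deriv v t| :=
      setIntegral_mono_set (hint _ hc.abs) (Eventually.of_forall fun t => abs_nonneg _)
        (union_subset hsub1 hsub2).eventuallyLE
    rw [setIntegral_union hdisj measurableSet_Ioo ((hint _ hc.abs).mono_set hsub1)
      ((hint _ hc.abs).mono_set hsub2)] at e1
    have := le_abs_self (v q - v p)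
    have := neg_abs_le (v (-p') - v (-q'))
    linarith
  rw [← ofReal_integral_eq_lintegral_ofReal (f := fun t => (deriv v t) ^ 2) (hint _ (hc.pow 2)) (Eventually.of_forall fun t => sq_nonneg _)]
  apply ENNReal.ofReal_le_ofReal
  have e2 : ∫ t in S, (2 * κ * |deriv v t| - κ ^ 2) ≤ ∫ t in S, (deriv v t) ^ 2 := by
    apply setIntegral_mono (hint _ (by fun_prop)) (hint _ (hc.pow 2))
    intro t
    change 2 * κ * |deriv v t| - κ ^ 2 ≤ (deriv v t) ^ 2
    nlinarith [sq_nonneg (|deriv v t| - κ), sq_abs (deriv v t)]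
  rw [integral_sub (hint _ (by fun_prop)) (hint _ (by fun_prop)), integral_const_mul] at e2
  simp only [integral_const, smul_eq_mul, measureReal_restrict_apply_univ] at e2
  nlinarith

/-- Inductive claim at level `s` (with `W = r² s²`). -/
def LevelClaim (v : ℝ → ℝ) (ν : Measure ℝ) (r ρ s : ℝ) : Prop :=
  ∀ x y, x < y → y - x < π → v x ≤ s → v y ≤ s →
    ENNReal.ofReal ((∫ t in Ioo x y, 4 * r ^ 2 * (max s (v t / ρ)) ^ 2)
        - 8 * (r ^ 2 * s ^ 2) * tan ((y - x) / 2)) ≤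
      (∫⁻ t in Ioo x y ∩ {t | s < v t}, ENNReal.ofReal ((deriv v t) ^ 2)) +
        2 * ∫⁻ t in Ioo x y ∩ {t | s < v t}, ENNReal.ofReal ((v t) ^ 2 - r ^ 2 * s ^ 2) ∂ν

lemma level_trivial {v : ℝ → ℝ} {r ρ s x y : ℝ} (hρ : 1 < ρ) (hxy : x < y)
    (hL : y - x < π) (hle : ∀ t ∈ Ioo x y, v t ≤ ρ * s) :
    ENNReal.ofReal ((∫ t in Ioo x y, 4 * r ^ 2 * (max s (v t / ρ)) ^ 2)
        - 8 * (r ^ 2 * s ^ 2) * tan ((y - x) / 2)) = 0 := by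
  have e : ∫ t in Ioo x y, 4 * r ^ 2 * (max s (v t / ρ)) ^ 2 =
      ∫ t in Ioo x y, 4 * r ^ 2 * s ^ 2 := by
    apply setIntegral_congr_fun measurableSet_Ioo
    intro t ht
    have : v t / ρ ≤ s := by rw [div_le_iff₀ (by linarith)]; linarith [hle t ht]
    simp only [max_eq_left this]
  rw [e]
  apply ENNReal.ofReal_of_nonpos
  have h := le_tan (x := (y - x) / 2) (by linarith) (by linarith)
  simp only [integral_const, smul_eq_mul, measureReal_restrict_apply_univ]
  rw [Real.volume_real_Ioo_of_le hxy.le]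
  nlinarith [mul_nonneg (sq_nonneg r) (sq_nonneg s)]

lemma ofReal_sum_le' {ι : Type*} (F : Finset ι) (f : ι → ℝ) :
    ENNReal.ofReal (∑ i ∈ F, f i) ≤ ∑ i ∈ F, ENNReal.ofReal (f i) :=
  Finset.le_sum_of_subadditive ENNReal.ofReal ENNReal.ofReal_zero.le
    (fun _ _ => ENNReal.ofReal_add_le) F f

lemma level_step {v : ℝ → ℝ} (hv : ContDiff ℝ 1 v) {ν : Measure ℝ}
    (hν : ∀ p q, p < q → q - p < π → (∀ t ∈ Icc p q, 0 < v t) →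
      ENNReal.ofReal (2 * tan ((q - p) / 2)) ≤ ν (Ioo p q))
    {r ρ s : ℝ} (hρ : 1 < ρ) (hr : 0 < r) (hrρ : r * (ρ + 1) = 2) (hs : 0 < s)
    (IH : LevelClaim v ν r ρ (ρ * s)) : LevelClaim v ν r ρ s := by
  intro x y hxy hL hx hy
  by_cases hne : ∃ z ∈ Ioo x y, ρ * s < v z
  swap
  · push Not at hne
    rw [level_trivial hρ hxy hL hne]; exact zero_le
  obtain ⟨z, hz, hvz⟩ := hne
  have hvc : Continuous v := hv.continuous
  have hr1 : r < 1 := by nlinarith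
  have hss : s < ρ * s := by nlinarith
  set s' := ρ * s with hs'
  set W := r ^ 2 * s ^ 2 with hW
  set W' := r ^ 2 * s' ^ 2 with hW'
  have hW0 : 0 < W := by positivity
  have hWW : W < W' := by
    rw [hW, hW']; gcongr
  set U := Ioo x y ∩ {t | s' < v t} with hU
  have hUo : IsOpen U := isOpen_Ioo.inter (isOpen_lt continuous_const hvc)
  have hUm := hUo.measurableSet
  set S := Ioo x y ∩ {t | s < v t ∧ v t ≤ s'} with hS
  have hSm : MeasurableSet S := measurableSet_Ioo.inter
    ((measurableSet_lt measurable_const hvc.measurable).inter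
      (measurableSet_le hvc.measurable measurable_const))
  have hUfin : volume U ≠ ∞ :=
    ne_top_of_le_ne_top (by simp) (measure_mono (inter_subset_left : U ⊆ Ioo x y))
  have hSfin : volume S ≠ ∞ :=
    ne_top_of_le_ne_top (by simp) (measure_mono (inter_subset_left : S ⊆ Ioo x y))
  have hSU : Disjoint S U := by
    rw [Set.disjoint_left]; intro t ht ht'; exact absurd ht.2.2 (not_le.2 ht'.2)
  have hunion : Ioo x y ∩ {t | s < v t} = S ∪ U := by
    ext t
    constructor
    · rintro ⟨h1, h2⟩
      rcases le_or_gt (v t) s' with h | h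
      · exact Or.inl ⟨h1, h2, h⟩
      · exact Or.inr ⟨h1, h⟩
    · rintro (h | h)
      · exact ⟨h.1, h.2.1⟩
      · exact ⟨h.1, lt_trans hss h.2⟩
  set L' := volume.real U with hL'
  have hL'0 : 0 ≤ L' := measureReal_nonneg
  have hSL : volume.real S + L' ≤ y - x := by
    rw [hL', ← measureReal_union hSU hUm hSfin hUfin, ← Real.volume_real_Ioo_of_le hxy.le]
    exact measureReal_mono (union_subset inter_subset_left inter_subset_left) (by simp)
  have hS0 : 0 ≤ volume.real S := measureReal_nonneg
  have hL'π : L' / 2 < π / 2 := by linarith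
  set T' := tan (L' / 2) with hT'
  have hT'0 : 0 ≤ T' := tan_nonneg_of_nonneg_of_le_pi_div_two (by linarith) (by linarith)
  -- the weight
  have hωc : ∀ a : ℝ, Continuous fun t => 4 * r ^ 2 * (max a (v t / ρ)) ^ 2 := fun a => by fun_prop
  have hint : ∀ f : ℝ → ℝ, Continuous f → IntegrableOn f (Ioo x y) := fun f hf =>
    (hf.integrableOn_Icc (a := x) (b := y)).mono_set Ioo_subset_Icc_self
  -- energy on the slab
  have hES := energy_lower hv (κ := 2 * (r * s) * T') hz.1 hz.2 hss hx hvz.le hy (by positivity)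
  rw [← hS] at hES
  -- measure on `U`
  set μ : Measure ℝ := volume.withDensity (fun t => ENNReal.ofReal ((deriv v t) ^ 2)) +
    (2 : ℝ≥0∞) • ν.withDensity (fun t => ENNReal.ofReal ((v t) ^ 2 - W')) +
    (2 * ENNReal.ofReal (W' - W)) • ν with hμ
  have hμa : ∀ J, MeasurableSet J → μ J = (∫⁻ t in J, ENNReal.ofReal ((deriv v t) ^ 2)) +
      2 * (∫⁻ t in J, ENNReal.ofReal ((v t) ^ 2 - W') ∂ν) + 2 * ENNReal.ofReal (W' - W) * ν J := by
    intro J hJ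
    simp [hμ, withDensity_apply _ hJ]
  obtain ⟨ι, hι, p, q, hpq, hdisj, hUeq, hend⟩ := open_components U hUo x y inter_subset_left
  have hJU : ∀ i, Ioo (p i) (q i) ⊆ U := fun i => by
    rw [hUeq]; exact subset_iUnion (fun i => Ioo (p i) (q i)) i
  have hJcl : ∀ i, Icc (p i) (q i) ⊆ Icc x y ∩ {t | s' ≤ v t} := fun i => by
    rw [← closure_Ioo (hpq i).ne]
    refine closure_minimal (fun t ht => ?_) (isClosed_Icc.inter (isClosed_le continuous_const hvc))
    have := hJU i ht
    exact ⟨Ioo_subset_Icc_self this.1, (show s' < v t from this.2).le⟩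
  have hpl : ∀ i, v (p i) ≤ s' := fun i => by
    have h1 := (hJcl i ⟨le_rfl, (hpq i).le⟩).1
    have h2 := (hJcl i ⟨(hpq i).le, le_rfl⟩).1
    rcases eq_or_lt_of_le h1.1 with h | h
    · rw [← h]; linarith
    · by_contra hc
      exact (hend i).1 ⟨⟨h, (hpq i).trans_le h2.2⟩, not_le.1 hc⟩
  have hql : ∀ i, v (q i) ≤ s' := fun i => by
    have h1 := (hJcl i ⟨le_rfl, (hpq i).le⟩).1
    have h2 := (hJcl i ⟨(hpq i).le, le_rfl⟩).1
    rcases eq_or_lt_of_le h2.2 with h | h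
    · rw [h]; linarith
    · by_contra hc
      exact (hend i).2 ⟨⟨h1.1.trans_lt (hpq i), h⟩, not_le.1 hc⟩
  have hlen : ∀ i, q i - p i < π := fun i => by
    have h1 := (hJcl i ⟨le_rfl, (hpq i).le⟩).1.1
    have h2 := (hJcl i ⟨(hpq i).le, le_rfl⟩).1.2
    linarith
  set ω' : ℝ → ℝ := fun t => 4 * r ^ 2 * (max s' (v t / ρ)) ^ 2 with hω'
  have hcomp : ∀ i, ENNReal.ofReal ((∫ t in Ioo (p i) (q i), ω' t) -
      4 * (W' + W) * tan ((q i - p i) / 2)) ≤ μ (Ioo (p i) (q i)) := by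
    intro i
    have h1 := IH (p i) (q i) (hpq i) (hlen i) (hpl i) (hql i)
    have h2 : Ioo (p i) (q i) ∩ {t | s' < v t} = Ioo (p i) (q i) :=
      inter_eq_left.2 fun t ht => (hJU i ht).2
    rw [h2] at h1
    have h3 := hν (p i) (q i) (hpq i) (hlen i) fun t ht => by
      have h : s' ≤ v t := (hJcl i ht).2
      have : 0 < s' := hs.trans hss
      linarith
    rw [hμa _ measurableSet_Ioo]
    calc _ = ENNReal.ofReal (((∫ t in Ioo (p i) (q i), ω' t) - 8 * W' * tan ((q i - p i) / 2)) +
          2 * (W' - W) * (2 * tan ((q i - p i) / 2))) := by congr 1; ring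
      _ ≤ _ := ENNReal.ofReal_add_le
      _ ≤ _ := by
        refine add_le_add h1 ?_
        rw [ENNReal.ofReal_mul (by linarith), ENNReal.ofReal_mul (by norm_num)]
        have : ENNReal.ofReal 2 = 2 := by norm_num
        rw [this]
        gcongr
  have hF : ∀ F : Finset ι, ENNReal.ofReal ((∑ i ∈ F, ∫ t in Ioo (p i) (q i), ω' t) -
      4 * (W' + W) * T') ≤ μ U := by
    intro F
    have hV : ∑ i ∈ F, (q i - p i) ≤ L' := by
      have e : ∑ i ∈ F, (q i - p i) = volume.real (⋃ i ∈ F, Ioo (p i) (q i)) := by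
        rw [measureReal_biUnion_finset (fun i _ j _ h => hdisj h) (fun i _ => measurableSet_Ioo)
          (fun i _ => by simp)]
        exact Finset.sum_congr rfl fun i _ => (Real.volume_real_Ioo_of_le (hpq i).le).symm
      rw [e]
      exact measureReal_mono (iUnion₂_subset fun i _ => hJU i) hUfin
    have hV0 : 0 ≤ ∑ i ∈ F, (q i - p i) := Finset.sum_nonneg fun i _ => by linarith [hpq i]
    have hT1 := tan_sum_le F (fun i => q i - p i) (fun i => by linarith [hpq i]) (by linarith)
    have hT2 : tan ((∑ i ∈ F, (q i - p i)) / 2) ≤ T' := by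
      have := tan_superadd (a := (∑ i ∈ F, (q i - p i)) / 2)
        (h := (L' - ∑ i ∈ F, (q i - p i)) / 2) (by linarith) (by linarith) (by linarith)
      have h0 := tan_nonneg_of_nonneg_of_le_pi_div_two
        (x := (L' - ∑ i ∈ F, (q i - p i)) / 2) (by linarith) (by linarith)
      have e : (∑ i ∈ F, (q i - p i)) / 2 + (L' - ∑ i ∈ F, (q i - p i)) / 2 = L' / 2 := by ring
      rw [e] at this
      linarith
    calc _ ≤ ENNReal.ofReal (∑ i ∈ F, ((∫ t in Ioo (p i) (q i), ω' t) -
          4 * (W' + W) * tan ((q i - p i) / 2))) := by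
          apply ENNReal.ofReal_le_ofReal
          rw [Finset.sum_sub_distrib, ← Finset.mul_sum]
          have : 0 ≤ 4 * (W' + W) := by linarith
          have := mul_le_mul_of_nonneg_left (hT1.trans hT2) this
          linarith
      _ ≤ ∑ i ∈ F, μ (Ioo (p i) (q i)) :=
          (ofReal_sum_le' F _).trans (Finset.sum_le_sum fun i _ => hcomp i)
      _ = μ (⋃ i ∈ F, Ioo (p i) (q i)) :=
          (measure_biUnion_finset (fun i _ j _ h => hdisj h) (fun i _ => measurableSet_Ioo)).symm
      _ ≤ μ U := measure_mono (iUnion₂_subset fun i _ => hJU i)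
  have hUint : ENNReal.ofReal ((∫ t in U, ω' t) - 4 * (W' + W) * T') ≤ μ U := by
    have hsum : HasSum (fun i => ∫ t in Ioo (p i) (q i), ω' t) (∫ t in U, ω' t) := by
      have hI : IntegrableOn ω' U := (hint _ (hωc s')).mono_set inter_subset_left
      rw [hUeq] at hI ⊢
      exact hasSum_integral_iUnion (fun i => measurableSet_Ioo) hdisj hI
    refine le_of_tendsto' (ENNReal.tendsto_ofReal (Tendsto.sub_const hsum _)) hF
  -- comparison of the weights
  have hωle : ∫ t in Ioo x y, 4 * r ^ 2 * (max s (v t / ρ)) ^ 2 ≤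
      (∫ t in U, ω' t) + 4 * W * (y - x - L') := by
    have hdiff : Ioo x y = U ∪ (Ioo x y \ U) := (union_sdiff_cancel inter_subset_left).symm
    have hvol : volume.real (Ioo x y \ U) = y - x - L' := by
      rw [measureReal_sdiff inter_subset_left hUm (by simp), Real.volume_real_Ioo_of_le hxy.le]
    have i1 := (hint _ (hωc s))
    conv_lhs => rw [hdiff]
    rw [setIntegral_union disjoint_sdiff_right (measurableSet_Ioo.diff hUm)
      (i1.mono_set inter_subset_left) (i1.mono_set sdiff_subset)]
    refine add_le_add ?_ ?_
    · refine setIntegral_mono (i1.mono_set inter_subset_left)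
        ((hint _ (hωc s')).mono_set inter_subset_left) fun t => ?_
      have : 0 ≤ max s (v t / ρ) := hs.le.trans (le_max_left _ _)
      simp only [hω']
      gcongr
    · have e : ∫ t in Ioo x y \ U, 4 * r ^ 2 * (max s (v t / ρ)) ^ 2 =
          ∫ t in Ioo x y \ U, 4 * W := by
        apply setIntegral_congr_fun (measurableSet_Ioo.diff hUm)
        intro t ht
        have h1 : v t ≤ s' := by
          by_contra hc
          exact ht.2 ⟨ht.1, not_le.1 hc⟩
        have : v t / ρ ≤ s := by rw [div_le_iff₀ (by linarith)]; linarith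
        simp only [max_eq_left this, hW]; ring
      rw [e]
      simp only [integral_const, smul_eq_mul, measureReal_restrict_apply_univ]
      rw [hvol]; linarith
  -- the right-hand side
  have hR : (∫⁻ t in S, ENNReal.ofReal ((deriv v t) ^ 2)) + μ U ≤
      (∫⁻ t in Ioo x y ∩ {t | s < v t}, ENNReal.ofReal ((deriv v t) ^ 2)) +
        2 * ∫⁻ t in Ioo x y ∩ {t | s < v t}, ENNReal.ofReal ((v t) ^ 2 - W) ∂ν := by
    rw [hμa _ hUm, hunion, lintegral_union hUm hSU]
    have h1 : (∫⁻ t in U, ENNReal.ofReal ((v t) ^ 2 - W') ∂ν) + ENNReal.ofReal (W' - W) * ν U ≤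
        ∫⁻ t in S ∪ U, ENNReal.ofReal ((v t) ^ 2 - W) ∂ν := by
      rw [← setLIntegral_const, ← lintegral_add_right _ measurable_const]
      refine le_trans (setLIntegral_mono' hUm fun t ht => ?_)
        (lintegral_mono_set subset_union_right)
      have h2 : s' < v t := ht.2
      have h3 : 0 < s' := hs.trans hss
      have h4 : W' ≤ (v t) ^ 2 := by
        rw [hW']
        have : r ^ 2 ≤ 1 := by nlinarith
        nlinarith [sq_nonneg s']
      rw [← ENNReal.ofReal_add (by linarith) (by linarith)]
      exact ENNReal.ofReal_le_ofReal (by linarith)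
    calc _ = (∫⁻ t in S, ENNReal.ofReal ((deriv v t) ^ 2)) +
          (∫⁻ t in U, ENNReal.ofReal ((deriv v t) ^ 2)) +
          2 * ((∫⁻ t in U, ENNReal.ofReal ((v t) ^ 2 - W') ∂ν) + ENNReal.ofReal (W' - W) * ν U) := by
            ring
      _ ≤ _ := by gcongr
  refine le_trans ?_ ((add_le_add hES hUint).trans hR)
  refine le_trans (ENNReal.ofReal_le_ofReal ?_) ENNReal.ofReal_add_le
  have htan := tan_tangent' (a := L' / 2) (h := (y - x - L') / 2) (by linarith) (by linarith)
    (by linarith)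
  have e : L' / 2 + (y - x - L') / 2 = (y - x) / 2 := by ring
  rw [e, ← hT'] at htan
  have e2 : W' - W = 2 * (r * s) * (s' - s) := by
    rw [hW, hW', hs']
    have : r ^ 2 * (ρ * s) ^ 2 - r ^ 2 * s ^ 2 = r * (r * (ρ + 1)) * s ^ 2 * (ρ - 1) := by ring
    rw [this, hrρ]; ring
  have e3 : 4 * (2 * (r * s) * T') * (s' - s) = 4 * (W' - W) * T' := by rw [e2]; ring
  have e4 : (2 * (r * s) * T') ^ 2 * volume.real S ≤ 4 * W * T' ^ 2 * (y - x - L') := by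
    have : (2 * (r * s) * T') ^ 2 = 4 * W * T' ^ 2 := by rw [hW]; ring
    rw [this]
    gcongr; linarith
  have e5 := mul_le_mul_of_nonneg_left htan (by linarith : 0 ≤ 8 * W)
  rw [e3]
  nlinarith

lemma level_all {v : ℝ → ℝ} (hv : ContDiff ℝ 1 v) {ν : Measure ℝ}
    (hν : ∀ p q, p < q → q - p < π → (∀ t ∈ Icc p q, 0 < v t) →
      ENNReal.ofReal (2 * tan ((q - p) / 2)) ≤ ν (Ioo p q))
    {r ρ : ℝ} (hρ : 1 < ρ) (hr : 0 < r) (hrρ : r * (ρ + 1) = 2) {B : ℝ} (hB : ∀ t, v t ≤ B)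
    {s : ℝ} (hs : 0 < s) : LevelClaim v ν r ρ s := by
  obtain ⟨n, hn⟩ := pow_unbounded_of_one_lt (B / s) hρ
  have hn' : B ≤ ρ ^ n * s := by
    rw [div_lt_iff₀ hs] at hn; exact hn.le
  clear hn
  induction n generalizing s with
  | zero =>
    intro x y hxy hL _ _
    rw [level_trivial hρ hxy hL fun t _ => ?_]
    · exact zero_le
    · have := hB t
      simp at hn'
      nlinarith
  | succ n ih =>
    refine level_step hv hν hρ hr hrρ hs (ih (by positivity) ?_)
    rw [pow_succ] at hn'; linarith

lemma half_bound {v : ℝ → ℝ} (hv : TestFun (-(π / 2)) (π / 2) v) {ν : Measure ℝ}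
    (hν : ∀ p q, p < q → q - p < π → (∀ t ∈ Icc p q, 0 < v t) →
      ENNReal.ofReal (2 * tan ((q - p) / 2)) ≤ ν (Ioo p q)) :
    4 * ∫⁻ t in Ioo (-(π / 2)) (π / 2), ENNReal.ofReal ((max (v t) 0) ^ 2) ≤
      (∫⁻ t in Ioo (-(π / 2)) (π / 2) ∩ {t | 0 < v t}, ENNReal.ofReal ((deriv v t) ^ 2)) +
        2 * ∫⁻ t in Ioo (-(π / 2)) (π / 2) ∩ {t | 0 < v t}, ENNReal.ofReal ((v t) ^ 2) ∂ν := by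
  obtain ⟨hv1, hv0⟩ := hv
  have hpi := Real.pi_gt_three
  have hvc : Continuous v := hv1.continuous
  have hdc : Continuous (deriv v) := hv1.continuous_deriv le_rfl
  obtain ⟨C₀, hC₀⟩ := (isCompact_Icc (a := -(π / 2)) (b := π / 2)).exists_bound_of_continuousOn
    hdc.continuousOn
  set C := max C₀ 1 with hC
  have hC1 : 1 ≤ C := le_max_right _ _
  have hlip : ∀ a ∈ Icc (-(π / 2)) (π / 2), ∀ b ∈ Icc (-(π / 2)) (π / 2),
      |v b - v a| ≤ C * |b - a| := fun a ha b hb =>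
    (convex_Icc _ _).norm_image_sub_le_of_norm_deriv_le
      (fun t _ => hv1.differentiable (by norm_num) t)
      (fun t ht => (hC₀ t ht).trans (le_max_left _ _)) ha hb
  have hvl : v (-(π / 2)) = 0 := hv0 _ (by simp)
  have hvr : v (π / 2) = 0 := hv0 _ (by simp)
  have hB : ∀ t, v t ≤ C * π := by
    intro t
    by_cases ht : t ∈ Ioo (-(π / 2)) (π / 2)
    · have := hlip (-(π / 2)) (by constructor <;> linarith) t (Ioo_subset_Icc_self ht)
      rw [hvl, abs_of_nonneg (by linarith [ht.1] : 0 ≤ t - -(π / 2))] at this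
      have h1 := le_abs_self (v t - 0)
      have h2 : C * (t - -(π / 2)) ≤ C * π := by gcongr; linarith [ht.2]
      linarith
    · rw [hv0 t ht]; positivity
  set I := Ioo (-(π / 2)) (π / 2) with hI
  have hint : ∀ f : ℝ → ℝ, Continuous f → IntegrableOn f I := fun f hf =>
    (hf.integrableOn_Icc (a := -(π / 2)) (b := π / 2)).mono_set Ioo_subset_Icc_self
  set Y := ∫ t in I, (max (v t) 0) ^ 2 with hY
  have hYl : ENNReal.ofReal Y = ∫⁻ t in I, ENNReal.ofReal ((max (v t) 0) ^ 2) :=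
    ofReal_integral_eq_lintegral_ofReal (f := fun t => (max (v t) 0) ^ 2)
      (hint _ (by fun_prop)) (Eventually.of_forall fun t => sq_nonneg _)
  have hY0 : 0 ≤ Y := integral_nonneg fun t => sq_nonneg _
  set R := (∫⁻ t in I ∩ {t | 0 < v t}, ENNReal.ofReal ((deriv v t) ^ 2)) +
        2 * ∫⁻ t in I ∩ {t | 0 < v t}, ENNReal.ofReal ((v t) ^ 2) ∂ν with hR
  have key : ∀ s ∈ Ioo (0 : ℝ) 1,
      ENNReal.ofReal (4 * (2 / (2 + s)) ^ 2 / (1 + s) ^ 2 * Y - 8 * s ^ 2 - 8 * C * s) ≤ R := by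
    rintro s ⟨hs, hs1⟩
    set h := s / C with hh
    have hh0 : 0 < h := by positivity
    have hCh : C * h = s := by rw [hh]; field_simp
    have hh1 : h < 1 := by rw [hh, div_lt_one (by linarith)]; linarith
    set r := 2 / (2 + s) with hr
    have hr0 : 0 < r := by positivity
    have hr1 : r < 1 := by rw [hr, div_lt_one (by linarith)]; linarith
    have hrr : r * ((1 + s) + 1) = 2 := by rw [hr]; field_simp; ring
    set x := -(π / 2) + h with hx
    set y := π / 2 - h with hy
    have hleft : ∀ t ∈ Icc (-(π / 2)) x, v t ≤ s := fun t ht => by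
      have := hlip (-(π / 2)) ⟨le_rfl, by linarith⟩ t ⟨ht.1, by linarith [ht.2]⟩
      rw [hvl, abs_of_nonneg (by linarith [ht.1] : 0 ≤ t - -(π / 2))] at this
      have h1 := le_abs_self (v t - 0)
      have h2 : C * (t - -(π / 2)) ≤ C * h := by gcongr; linarith [ht.2]
      linarith
    have hright : ∀ t ∈ Icc y (π / 2), v t ≤ s := fun t ht => by
      have := hlip (π / 2) ⟨by linarith, le_rfl⟩ t ⟨by linarith [ht.1], ht.2⟩
      rw [hvr, abs_of_nonpos (by linarith [ht.2] : t - π / 2 ≤ 0)] at this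
      have h1 := le_abs_self (v t - 0)
      have h2 : C * (-(t - π / 2)) ≤ C * h := by gcongr; linarith [ht.1]
      linarith
    have hxy : x < y := by linarith
    have hsubI : Ioo x y ⊆ I := Ioo_subset_Ioo (by linarith) (by linarith)
    have hcl := level_all hv1 hν (r := r) (ρ := 1 + s) (by linarith) hr0 hrr hB hs x y hxy
      (by linarith) (hleft x ⟨by linarith, le_rfl⟩) (hright y ⟨le_rfl, by linarith⟩)
    refine le_trans (le_trans (ENNReal.ofReal_le_ofReal ?_) hcl) ?_
    · -- real inequality
      have htan : tan ((y - x) / 2) ≤ C / s := by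
        have e : (y - x) / 2 = π / 2 - h := by rw [hx, hy]; ring
        rw [e, tan_pi_div_two_sub]
        have h1 := le_tan hh0.le (by linarith)
        calc (tan h)⁻¹ ≤ h⁻¹ := inv_anti₀ hh0 h1
          _ = C / s := by rw [hh, inv_div]
      have h1 : 8 * (r ^ 2 * s ^ 2) * tan ((y - x) / 2) ≤ 8 * C * s := by
        calc 8 * (r ^ 2 * s ^ 2) * tan ((y - x) / 2) ≤ 8 * (r ^ 2 * s ^ 2) * (C / s) := by gcongr
          _ = r ^ 2 * (8 * C * s) := by field_simp
          _ ≤ 1 * (8 * C * s) := by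
            gcongr
            nlinarith
          _ = _ := one_mul _
      have hωc : Continuous fun t => 4 * r ^ 2 * (max s (v t / (1 + s))) ^ 2 := by fun_prop
      have h2 : 4 * r ^ 2 / (1 + s) ^ 2 * Y ≤
          ∫ t in I, 4 * r ^ 2 * (max s (v t / (1 + s))) ^ 2 := by
        rw [hY, ← integral_const_mul]
        refine setIntegral_mono (hint _ (by fun_prop)) (hint _ hωc) fun t => ?_
        have e : 4 * r ^ 2 / (1 + s) ^ 2 * (max (v t) 0) ^ 2 =
            4 * r ^ 2 * (max (v t) 0 / (1 + s)) ^ 2 := by field_simp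
        simp only [e]
        have h3 : max (v t) 0 / (1 + s) ≤ max s (v t / (1 + s)) := by
          rcases le_total (v t) 0 with h4 | h4
          · rw [max_eq_right h4, zero_div]; exact hs.le.trans (le_max_left _ _)
          · rw [max_eq_left h4]; exact le_max_right _ _
        have h5 : 0 ≤ max (v t) 0 / (1 + s) := by positivity
        gcongr
      have h3 : ∫ t in I, 4 * r ^ 2 * (max s (v t / (1 + s))) ^ 2 ≤
          (∫ t in Ioo x y, 4 * r ^ 2 * (max s (v t / (1 + s))) ^ 2) + 8 * s ^ 2 := by
        conv_lhs => rw [← union_sdiff_cancel hsubI]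
        rw [setIntegral_union disjoint_sdiff_right (measurableSet_Ioo.diff measurableSet_Ioo)
          ((hint _ hωc).mono_set hsubI) ((hint _ hωc).mono_set sdiff_subset)]
        have e : ∫ t in I \ Ioo x y, 4 * r ^ 2 * (max s (v t / (1 + s))) ^ 2 =
            ∫ t in I \ Ioo x y, 4 * r ^ 2 * s ^ 2 := by
          apply setIntegral_congr_fun (measurableSet_Ioo.diff measurableSet_Ioo)
          intro t ht
          have h1 : v t ≤ s := by
            rcases le_or_gt t x with h | h
            · exact hleft t ⟨ht.1.1.le, h⟩
            · refine hright t ⟨?_, ht.1.2.le⟩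
              by_contra hc
              exact ht.2 ⟨h, not_le.1 hc⟩
          have : v t / (1 + s) ≤ s := by rw [div_le_iff₀ (by linarith)]; nlinarith
          simp only [max_eq_left this]
        rw [e]
        simp only [integral_const, smul_eq_mul, measureReal_restrict_apply_univ]
        rw [measureReal_sdiff hsubI measurableSet_Ioo (by simp [hI]),
          Real.volume_real_Ioo_of_le hxy.le, hI, Real.volume_real_Ioo_of_le (by linarith)]
        have e2 : π / 2 - -(π / 2) - (y - x) = 2 * h := by rw [hx, hy]; ring
        rw [e2]
        have h4 : r ^ 2 * h ≤ 1 := by nlinarith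
        nlinarith [sq_nonneg s]
      linarith
    · have hsub2 : Ioo x y ∩ {t | s < v t} ⊆ I ∩ {t | 0 < v t} := fun t ht =>
        ⟨hsubI ht.1, hs.trans (show s < v t from ht.2)⟩
      refine add_le_add (lintegral_mono_set hsub2) ?_
      refine mul_le_mul_right ?_ 2
      refine (lintegral_mono fun t => ?_).trans (lintegral_mono_set hsub2)
      apply ENNReal.ofReal_le_ofReal
      have : 0 ≤ r ^ 2 * s ^ 2 := by positivity
      linarith
  have hlim : Tendsto (fun s : ℝ => ENNReal.ofReal
      (4 * (2 / (2 + s)) ^ 2 / (1 + s) ^ 2 * Y - 8 * s ^ 2 - 8 * C * s)) (nhdsWithin 0 (Ioi 0))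
      (nhds (ENNReal.ofReal (4 * Y))) := by
    apply ENNReal.tendsto_ofReal
    have hc : ContinuousAt (fun s : ℝ =>
      4 * (2 / (2 + s)) ^ 2 / (1 + s) ^ 2 * Y - 8 * s ^ 2 - 8 * C * s) 0 := by
      fun_prop (disch := norm_num)
    have := hc.tendsto
    norm_num at this
    exact this.mono_left nhdsWithin_le_nhds
  have hfin : ENNReal.ofReal (4 * Y) ≤ R := by
    refine le_of_tendsto hlim ?_
    filter_upwards [Ioo_mem_nhdsGT (zero_lt_one' ℝ)] with s hs using key s hs
  rw [ENNReal.ofReal_mul (by norm_num), hYl] at hfin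
  have : ENNReal.ofReal 4 = 4 := by norm_num
  rwa [this] at hfin

lemma full_bound {v : ℝ → ℝ} (hv : TestFun (-(π / 2)) (π / 2) v) {ν : Measure ℝ}
    (hν : ∀ p q, p < q → q - p < π → (∀ t ∈ Icc p q, v t ≠ 0) →
      ENNReal.ofReal (2 * tan ((q - p) / 2)) ≤ ν (Ioo p q)) :
    4 * ∫⁻ t in Ioo (-(π / 2)) (π / 2), ENNReal.ofReal ((v t) ^ 2) ≤
      (∫⁻ t in Ioo (-(π / 2)) (π / 2), ENNReal.ofReal ((deriv v t) ^ 2)) +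
        2 * ∫⁻ t in Ioo (-(π / 2)) (π / 2), ENNReal.ofReal ((v t) ^ 2) ∂ν := by
  have hvc : Continuous v := hv.1.continuous
  have h1 := half_bound hv (ν := ν) fun p q hpq hL h => hν p q hpq hL fun t ht => (h t ht).ne'
  have hv' : TestFun (-(π / 2)) (π / 2) (fun t => - v t) :=
    ⟨hv.1.neg, fun t ht => by simp [hv.2 t ht]⟩
  have h2 := half_bound hv' (ν := ν) fun p q hpq hL h => hν p q hpq hL fun t ht => by
    have := h t ht
    intro h0
    rw [h0] at this; simp at this
  have hd : ∀ t, deriv (fun t => - v t) t = - deriv v t := fun t => by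
    simp
  simp only [hd, neg_sq] at h2
  set I := Ioo (-(π / 2)) (π / 2) with hI
  have e1 : ∫⁻ t in I, ENNReal.ofReal ((v t) ^ 2) =
      (∫⁻ t in I, ENNReal.ofReal ((max (v t) 0) ^ 2)) +
      ∫⁻ t in I, ENNReal.ofReal ((max (- v t) 0) ^ 2) := by
    rw [← lintegral_add_left (by fun_prop)]
    refine lintegral_congr fun t => ?_
    rw [← ENNReal.ofReal_add (sq_nonneg _) (sq_nonneg _)]
    congr 1
    rcases le_total (v t) 0 with h | h
    · rw [max_eq_right h, max_eq_left (by linarith)]; ring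
    · rw [max_eq_left h, max_eq_right (by linarith)]; ring
  have hm : MeasurableSet (I ∩ {t | 0 < - v t}) :=
    measurableSet_Ioo.inter (measurableSet_lt measurable_const hvc.neg.measurable)
  have hdisj : Disjoint (I ∩ {t | 0 < v t}) (I ∩ {t | 0 < - v t}) := by
    rw [Set.disjoint_left]
    intro t ht ht'
    have a : 0 < v t := ht.2
    have b : 0 < - v t := ht'.2
    linarith
  have e2 : ∀ (m : Measure ℝ) (f : ℝ → ℝ≥0∞), (∫⁻ t in I ∩ {t | 0 < v t}, f t ∂m) +
      (∫⁻ t in I ∩ {t | 0 < - v t}, f t ∂m) ≤ ∫⁻ t in I, f t ∂m := fun m f => by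
    rw [← lintegral_union hm hdisj]
    exact lintegral_mono_set (union_subset inter_subset_left inter_subset_left)
  rw [e1, mul_add]
  refine (add_le_add h1 h2).trans ?_
  have a1 := e2 volume fun t => ENNReal.ofReal ((deriv v t) ^ 2)
  have a2 := e2 ν fun t => ENNReal.ofReal ((v t) ^ 2)
  refine le_trans (le_of_eq ?_) (add_le_add a1 (mul_le_mul_right a2 2))
  ring

lemma psi_hyp (P : PsiA) {v : ℝ → ℝ} (hv : TestFun (-(π / 2)) (π / 2) v)
    (hfin : ∫⁻ t in Ioo (-(π / 2)) (π / 2), ENNReal.ofReal ((v t) ^ 2) ∂P.derivM ≠ ∞) :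
    ∀ p q, p < q → q - p < π → (∀ t ∈ Icc p q, v t ≠ 0) →
      ENNReal.ofReal (2 * tan ((q - p) / 2)) ≤ P.derivM (Ioo p q) := by
  have hvc : Continuous v := hv.1.continuous
  have hdm : MeasurableSet P.dom := P.domConn.measurableSet
  set I := Ioo (-(π / 2)) (π / 2) with hI
  have hnull : volume ({t | v t ≠ 0} \ P.dom) = 0 := by
    have h0 : ∫⁻ t in I \ P.dom, ENNReal.ofReal ((v t) ^ 2) = 0 := by
      by_contra hne
      apply hfin
      have e : (volume.restrict (I \ P.dom)).restrict I = volume.restrict (I \ P.dom) := by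
        rw [Measure.restrict_restrict measurableSet_Ioo, inter_eq_right.2 sdiff_subset]
      rw [PsiA.derivM, Measure.restrict_add, lintegral_add_measure, Measure.restrict_smul,
        lintegral_smul_measure, ← hI, e, smul_eq_mul, ENNReal.top_mul hne, add_top]
    rw [lintegral_eq_zero_iff (by fun_prop)] at h0
    have h1 : ∀ᵐ t ∂volume.restrict (I \ P.dom), v t = 0 := by
      filter_upwards [h0] with t ht
      simp only [Pi.zero_apply, ENNReal.ofReal_eq_zero] at ht
      nlinarith [sq_nonneg (v t)]
    rw [ae_restrict_iff' (measurableSet_Ioo.diff hdm)] at h1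
    refine measure_mono_null ?_ (ae_iff.1 h1)
    intro t ht
    have h2 : v t ≠ 0 := ht.1
    change ¬ (t ∈ I \ P.dom → v t = 0)
    intro h
    refine h2 (h ⟨?_, ht.2⟩)
    by_contra hc
    exact h2 (hv.2 t hc)
  have hdom : ∀ t, v t ≠ 0 → t ∈ P.dom := by
    intro t ht
    have hopen : IsOpen {t | v t ≠ 0} := isOpen_ne_fun hvc continuous_const
    obtain ⟨ε, hε, hball⟩ := Metric.isOpen_iff.1 hopen t ht
    rw [Real.ball_eq_Ioo] at hball
    have hex : ∀ a b, a < b → Ioo a b ⊆ {t | v t ≠ 0} → ∃ c ∈ Ioo a b, c ∈ P.dom := by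
      intro a b hab hsub
      by_contra hc
      push Not at hc
      have h1 : Ioo a b ⊆ {t | v t ≠ 0} \ P.dom := fun c hcm => ⟨hsub hcm, hc c hcm⟩
      have h2 := measure_mono_null h1 hnull
      rw [Real.volume_Ioo, ENNReal.ofReal_eq_zero] at h2
      linarith
    obtain ⟨c, hc, hcd⟩ := hex (t - ε) t (by linarith)
      ((Ioo_subset_Ioo le_rfl (by linarith)).trans hball)
    obtain ⟨d, hd, hdd⟩ := hex t (t + ε) (by linarith)
      ((Ioo_subset_Ioo (by linarith) le_rfl).trans hball)
    exact P.domConn.out hcd hdd ⟨hc.2.le, hd.1.le⟩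
  intro p q hpq hL hne
  have hsub : Icc p q ⊆ P.dom := fun t ht => hdom t (hne t ht)
  have h1 : P.nu (Ioo p q) ≤ P.derivM (Ioo p q) := by
    rw [PsiA.derivM, Measure.add_apply, Measure.restrict_apply measurableSet_Ioo,
      inter_eq_left.2 (Ioo_subset_Icc_self.trans hsub)]
    exact le_self_add
  refine le_trans ?_ h1
  have hpi := Real.pi_pos
  have hct : ContinuousAt (fun t => 2 * tan ((t - p) / 2)) q := by
    have h2 : ContinuousAt tan ((q - p) / 2) :=
      continuousAt_tan.2 (cos_pos_of_mem_Ioo ⟨by linarith, by linarith⟩).ne'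
    have h3 : ContinuousAt (fun t => (t - p) / 2) q := by fun_prop
    exact continuousAt_const.mul (ContinuousAt.comp (g := tan) (f := fun t => (t - p) / 2) h2 h3)
  have hlim := ENNReal.tendsto_ofReal (hct.tendsto.mono_left
    (nhdsWithin_le_nhds (s := Iio q)))
  refine le_of_tendsto hlim ?_
  filter_upwards [Ioo_mem_nhdsLT hpq] with t ht
  have hp : p ∈ P.dom := hsub ⟨le_rfl, hpq.le⟩
  have htd : t ∈ P.dom := hsub ⟨ht.1.le, ht.2.le⟩
  calc _ ≤ ENNReal.ofReal (P.psi t - P.psi p) := ENNReal.ofReal_le_ofReal (P.gap hp htd ht.1)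
    _ = P.nu (Ioc p t) := (P.nu_eq hp htd ht.1.le).symm
    _ ≤ P.nu (Ioo p q) := measure_mono fun u hu => ⟨hu.1, hu.2.trans_lt ht.2⟩

lemma four_le_lam1 (P : PsiA) : 4 ≤ lam1 (-(π / 2)) (π / 2) ((2 : ℝ≥0∞) • P.derivM) := by
  refine le_iInf fun v => le_iInf fun hv => ?_
  obtain ⟨hv, hD⟩ := hv
  have hDfin : ∫⁻ t in Ioo (-(π / 2)) (π / 2), ENNReal.ofReal ((v t) ^ 2) ≠ ∞ := by
    have hi : IntegrableOn (fun t => (v t) ^ 2) (Ioo (-(π / 2)) (π / 2)) :=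
      ((hv.1.continuous.pow 2).integrableOn_Icc).mono_set Ioo_subset_Icc_self
    rw [← ofReal_integral_eq_lintegral_ofReal (f := fun t => (v t) ^ 2) hi
      (Eventually.of_forall fun t => sq_nonneg _)]
    exact ENNReal.ofReal_ne_top
  rw [dirRQ, ENNReal.le_div_iff_mul_le (Or.inl hD) (Or.inl hDfin), Measure.restrict_smul,
    lintegral_smul_measure, smul_eq_mul]
  by_cases hfin : ∫⁻ t in Ioo (-(π / 2)) (π / 2), ENNReal.ofReal ((v t) ^ 2) ∂P.derivM = ∞
  · rw [hfin]; simp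
  · exact full_bound hv (psi_hyp P hv hfin)

lemma cos_sq_le_left (x : ℝ) : cos x ^ 2 ≤ (x - -(π / 2)) ^ 2 := by
  have : cos x = sin (x - -(π / 2)) := by rw [sub_neg_eq_add, sin_add_pi_div_two]
  rw [this]
  exact sq_le_sq.2 abs_sin_le_abs

lemma cos_sq_le_right (x : ℝ) : cos x ^ 2 ≤ (x - π / 2) ^ 2 := by
  have : cos x = - sin (x - π / 2) := by rw [sin_sub_pi_div_two, neg_neg]
  rw [this, neg_sq]
  exact sq_le_sq.2 abs_sin_le_abs

lemma cosSq_abs_le {e : ℝ} (he : e ∉ Ioo (-(π / 2)) (π / 2)) (x : ℝ) :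
    |cosSq x| ≤ (x - e) ^ 2 := by
  unfold cosSq
  split_ifs with hx
  · rw [abs_of_nonneg (sq_nonneg _)]
    rcases le_or_gt e (-(π / 2)) with h | h
    · refine (cos_sq_le_left x).trans ?_
      have := hx.1
      nlinarith
    · have h2 : π / 2 ≤ e := by
        by_contra hc
        exact he ⟨h, not_le.1 hc⟩
      refine (cos_sq_le_right x).trans ?_
      have := hx.2
      nlinarith
  · rw [abs_zero]; exact sq_nonneg _

lemma cosSq_hasDerivAt_in {x : ℝ} (hx : x ∈ Ioo (-(π / 2)) (π / 2)) :
    HasDerivAt cosSq (-(2 * sin x * cos x)) x := by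
  have h1 : HasDerivAt (fun x => cos x ^ 2) (-(2 * sin x * cos x)) x :=
    ((hasDerivAt_cos x).pow 2).congr_deriv (by push_cast; ring)
  refine h1.congr_of_eventuallyEq ?_
  filter_upwards [isOpen_Ioo.mem_nhds hx] with t ht
  simp only [cosSq, if_pos ht]

lemma cosSq_hasDerivAt_out {e : ℝ} (he : e ∉ Ioo (-(π / 2)) (π / 2)) :
    HasDerivAt cosSq 0 e := by
  have h0 : cosSq e = 0 := by simp only [cosSq, if_neg he]
  rw [hasDerivAt_iff_isLittleO]
  simp only [h0, sub_zero, smul_zero]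
  have h1 : cosSq =O[nhds e] fun x => (x - e) ^ 2 := by
    refine Asymptotics.IsBigO.of_bound 1 (Eventually.of_forall fun x => ?_)
    rw [one_mul, Real.norm_eq_abs, Real.norm_eq_abs, abs_of_nonneg (sq_nonneg (x - e))]
    exact cosSq_abs_le he x
  refine h1.trans_isLittleO ?_
  have h2 := Asymptotics.isLittleO_pow_sub_sub e (m := 2) (by norm_num)
  simpa only [Real.norm_eq_abs, sq_abs] using h2

lemma cosSq_testFun : TestFun (-(π / 2)) (π / 2) cosSq := by
  have hpi := Real.pi_pos
  refine ⟨?_, fun x hx => by simp only [cosSq, if_neg hx]⟩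
  rw [contDiff_one_iff_deriv]
  have hd : ∀ x, HasDerivAt cosSq (-(2 * sin (max (-(π / 2)) (min (π / 2) x)) *
      cos (max (-(π / 2)) (min (π / 2) x)))) x := by
    intro x
    by_cases hx : x ∈ Ioo (-(π / 2)) (π / 2)
    · rw [min_eq_right hx.2.le, max_eq_right hx.1.le]
      exact cosSq_hasDerivAt_in hx
    · have h1 := cosSq_hasDerivAt_out hx
      convert h1 using 1
      rcases le_or_gt x (-(π / 2)) with h | h
      · rw [min_eq_right (by linarith), max_eq_left h]; simp
      · have h2 : π / 2 ≤ x := by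
          by_contra hc
          exact hx ⟨h, not_le.1 hc⟩
        rw [min_eq_left h2, max_eq_right (by linarith)]; simp
  refine ⟨fun x => (hd x).differentiableAt, ?_⟩
  have : deriv cosSq = fun x => -(2 * sin (max (-(π / 2)) (min (π / 2) x)) *
      cos (max (-(π / 2)) (min (π / 2) x))) := funext fun x => (hd x).deriv
  rw [this]
  fun_prop

lemma sec_lintegral {c d : ℝ} (hc : c ∈ Ioo (-(π / 2)) (π / 2))
    (hd : d ∈ Ioo (-(π / 2)) (π / 2)) (hcd : c ≤ d) :
    ∫⁻ x in Ioc c d, ENNReal.ofReal (1 / cos x ^ 2) = ENNReal.ofReal (tan d - tan c) := by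
  have hne : ∀ x ∈ Icc c d, cos x ≠ 0 := fun x hx =>
    (cos_pos_of_mem_Ioo ⟨hc.1.trans_le hx.1, hx.2.trans_lt hd.2⟩).ne'
  have hcont : ContinuousOn (fun x => 1 / cos x ^ 2) (Icc c d) := by
    refine ContinuousOn.div continuousOn_const (by fun_prop) fun x hx => pow_ne_zero _ (hne x hx)
  have hint : IntervalIntegrable (fun x => 1 / cos x ^ 2) volume c d := by
    apply ContinuousOn.intervalIntegrable
    rwa [uIcc_of_le hcd]
  have h1 := intervalIntegral.integral_eq_sub_of_hasDerivAt (f := tan)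
    (f' := fun x => 1 / cos x ^ 2) (a := c) (b := d)
    (fun x hx => hasDerivAt_tan (hne x (by rwa [uIcc_of_le hcd] at hx))) hint
  rw [intervalIntegral.integral_of_le hcd] at h1
  rw [← h1]
  refine (ofReal_integral_eq_lintegral_ofReal (f := fun x => 1 / cos x ^ 2) ?_
    (Eventually.of_forall fun t => by positivity)).symm
  rwa [intervalIntegrable_iff_integrableOn_Ioc_of_le hcd] at hint

lemma nu_piece (P : PsiA) (hdom : P.dom = Ioo (-(π / 2)) (π / 2))
    (hpsi : ∀ x ∈ P.dom, P.psi x = tan x) {a b : ℝ} (ha : a ∈ Ioo (-(π / 2)) (π / 2))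
    (hb : b ∈ Ioo (-(π / 2)) (π / 2)) (hab : a ≤ b) :
    P.nu.restrict (Ioc a b) =
      (volume.withDensity fun x => ENNReal.ofReal (1 / cos x ^ 2)).restrict (Ioc a b) := by
  rw [hdom] at hpsi
  have hnu : ∀ c ∈ Ioo (-(π / 2)) (π / 2), ∀ d ∈ Ioo (-(π / 2)) (π / 2), c ≤ d →
      P.nu (Ioc c d) = ENNReal.ofReal (tan d - tan c) := fun c hc d hd hcd => by
    rw [P.nu_eq (hdom ▸ hc) (hdom ▸ hd) hcd, hpsi c hc, hpsi d hd]
  have : IsFiniteMeasure (P.nu.restrict (Ioc a b)) := ⟨by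
    rw [Measure.restrict_apply_univ, hnu a ha b hb hab]; exact ENNReal.ofReal_lt_top⟩
  refine Measure.ext_of_Ioc _ _ fun c d hcd => ?_
  rw [Measure.restrict_apply measurableSet_Ioc, Measure.restrict_apply measurableSet_Ioc,
    Ioc_inter_Ioc]
  rcases le_or_gt (max c a) (min d b) with h | h
  · have h1 : max c a ∈ Ioo (-(π / 2)) (π / 2) :=
      ⟨ha.1.trans_le (le_max_right _ _), (h.trans (min_le_right _ _)).trans_lt hb.2⟩
    have h2 : min d b ∈ Ioo (-(π / 2)) (π / 2) :=
      ⟨h1.1.trans_le h, (min_le_right _ _).trans_lt hb.2⟩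
    rw [hnu _ h1 _ h2 h, withDensity_apply _ measurableSet_Ioc, sec_lintegral h1 h2 h]
  · have : Ioc (max c a) (min d b) = ∅ := Ioc_eq_empty (not_lt.2 h.le)
    simp only [this, measure_empty]

lemma nu_eq_sec (P : PsiA) (hdom : P.dom = Ioo (-(π / 2)) (π / 2))
    (hpsi : ∀ x ∈ P.dom, P.psi x = tan x) :
    P.nu.restrict (Ioo (-(π / 2)) (π / 2)) =
      (volume.withDensity fun x => ENNReal.ofReal (1 / cos x ^ 2)).restrict
        (Ioo (-(π / 2)) (π / 2)) := by
  have hpi := Real.pi_gt_three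
  have hU : Ioo (-(π / 2)) (π / 2) =
      ⋃ n : ℕ, Ioc (-(π / 2) + 1 / ((n : ℝ) + 1)) (π / 2 - 1 / ((n : ℝ) + 1)) := by
    ext x
    simp only [mem_iUnion]
    constructor
    · rintro ⟨h1, h2⟩
      have hm : 0 < min (x + π / 2) (π / 2 - x) := lt_min (by linarith) (by linarith)
      obtain ⟨n, hn⟩ := exists_nat_one_div_lt hm
      have h3 := hn.trans_le (min_le_left _ _)
      have h4 := hn.trans_le (min_le_right _ _)
      exact ⟨n, by linarith, by linarith⟩
    · rintro ⟨n, h1, h2⟩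
      have : 0 < 1 / ((n : ℝ) + 1) := by positivity
      exact ⟨by linarith, by linarith⟩
  rw [hU, Measure.restrict_iUnion_congr]
  intro n
  have h0 : 0 < 1 / ((n : ℝ) + 1) := by positivity
  have h1 : 1 / ((n : ℝ) + 1) ≤ 1 := by
    rw [div_le_one (by positivity)]
    linarith [n.cast_nonneg (α := ℝ)]
  exact nu_piece P hdom hpsi ⟨by linarith, by linarith⟩ ⟨by linarith, by linarith⟩ (by linarith)

lemma cosSq_potential (P : PsiA) (hdom : P.dom = Ioo (-(π / 2)) (π / 2))
    (hpsi : ∀ x ∈ P.dom, P.psi x = tan x) :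
    ∫⁻ x in Ioo (-(π / 2)) (π / 2), ENNReal.ofReal ((cosSq x) ^ 2) ∂P.derivM =
      ∫⁻ x in Ioo (-(π / 2)) (π / 2), ENNReal.ofReal (cos x ^ 2) := by
  have e : P.derivM = P.nu.restrict (Ioo (-(π / 2)) (π / 2)) := by
    rw [PsiA.derivM, hdom]; simp
  rw [e, Measure.restrict_restrict measurableSet_Ioo, inter_self, nu_eq_sec P hdom hpsi,
    restrict_withDensity measurableSet_Ioo,
    lintegral_withDensity_eq_lintegral_mul _ (by fun_prop)
      (by have := cosSq_testFun.1.continuous; fun_prop)]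
  refine setLIntegral_congr_fun measurableSet_Ioo fun x hx => ?_
  have hc := (cos_pos_of_mem_Ioo hx).ne'
  simp only [Pi.mul_apply, cosSq, if_pos hx]
  rw [← ENNReal.ofReal_mul (by positivity)]
  congr 1
  field_simp

lemma lint_I {f : ℝ → ℝ} (hf : Continuous f) (h0 : ∀ x, 0 ≤ f x) :
    ∫⁻ x in Ioo (-(π / 2)) (π / 2), ENNReal.ofReal (f x) =
      ENNReal.ofReal (∫ x in (-(π / 2))..(π / 2), f x) := by
  have hpi := Real.pi_pos
  rw [intervalIntegral.integral_of_le (by linarith), integral_Ioc_eq_integral_Ioo]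
  exact (ofReal_integral_eq_lintegral_ofReal
    ((hf.integrableOn_Icc).mono_set Ioo_subset_Icc_self) (Eventually.of_forall h0)).symm

lemma int_cos_two : ∫ x in (-(π / 2))..(π / 2), cos x ^ 2 = π / 2 := by
  rw [integral_cos_sq]; simp

lemma int_cos_four : ∫ x in (-(π / 2))..(π / 2), cos x ^ 4 = 3 * π / 8 := by
  have := integral_cos_pow (a := -(π / 2)) (b := π / 2) 2
  rw [this, int_cos_two]
  simp
  ring

lemma int_num : ∫ x in (-(π / 2))..(π / 2), (-(2 * sin x * cos x)) ^ 2 = π / 2 := by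
  have e : ∀ x : ℝ, (-(2 * sin x * cos x)) ^ 2 = 4 * cos x ^ 2 - 4 * cos x ^ 4 := fun x => by
    have := sin_sq x
    linear_combination 4 * cos x ^ 2 * this
  simp only [e]
  rw [intervalIntegral.integral_sub (Continuous.intervalIntegrable (by fun_prop) _ _)
    (Continuous.intervalIntegrable (by fun_prop) _ _),
    intervalIntegral.integral_const_mul, intervalIntegral.integral_const_mul,
    int_cos_two, int_cos_four]
  ring

lemma cosSq_den : ∫⁻ x in Ioo (-(π / 2)) (π / 2), ENNReal.ofReal ((cosSq x) ^ 2) =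
    ENNReal.ofReal (3 * π / 8) := by
  rw [← int_cos_four, ← lint_I (by fun_prop) (fun x => by positivity)]
  refine setLIntegral_congr_fun measurableSet_Ioo fun x hx => ?_
  simp only [cosSq, if_pos hx]
  congr 1; ring

lemma cosSq_RQ (P : PsiA) (hdom : P.dom = Ioo (-(π / 2)) (π / 2))
    (hpsi : ∀ x ∈ P.dom, P.psi x = tan x) :
    dirRQ (-(π / 2)) (π / 2) ((2 : ℝ≥0∞) • P.derivM) cosSq = 4 := by
  have hpi := Real.pi_pos
  have e1 : ∫⁻ x in Ioo (-(π / 2)) (π / 2), ENNReal.ofReal ((deriv cosSq x) ^ 2) =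
      ENNReal.ofReal (π / 2) := by
    refine Eq.trans ?_ ((lint_I (f := fun x => (-(2 * sin x * cos x)) ^ 2) (by fun_prop)
      (fun x => sq_nonneg _)).trans (congrArg ENNReal.ofReal int_num))
    refine setLIntegral_congr_fun measurableSet_Ioo fun x hx => ?_
    simp only [(cosSq_hasDerivAt_in hx).deriv]
  have h2 : (2 : ℝ≥0∞) = ENNReal.ofReal 2 := by norm_num
  have h4 : (4 : ℝ≥0∞) = ENNReal.ofReal 4 := by norm_num
  rw [dirRQ, Measure.restrict_smul, lintegral_smul_measure, smul_eq_mul,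
    cosSq_potential P hdom hpsi, e1, cosSq_den,
    lint_I (by fun_prop) (fun x => by positivity), int_cos_two, h2, h4,
    ← ENNReal.ofReal_mul (by norm_num), ← ENNReal.ofReal_add (by positivity) (by positivity),
    ← ENNReal.ofReal_div_of_pos (by positivity)]
  congr 1
  field_simp
  norm_num

/-- Proposition 2.4 / `p:seconda`: for every `ψ ∈ 𝒜(I_π)` it holds
`λ₁(I_π, 2ψ') ≥ 4`; in particular, equality occurs if `ψ(x) = tan x`, and in that case
an eigenfunction is `cos² x`. -/
theorem lower_bound_two_psi_deriv (P : PsiA) :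
    4 ≤ lam1 (-(π / 2)) (π / 2) ((2 : ℝ≥0∞) • P.derivM) ∧
    ((P.dom = Ioo (-(π / 2)) (π / 2) ∧ ∀ x ∈ P.dom, P.psi x = tan x) →
      lam1 (-(π / 2)) (π / 2) ((2 : ℝ≥0∞) • P.derivM) = 4 ∧
      dirRQ (-(π / 2)) (π / 2) ((2 : ℝ≥0∞) • P.derivM) cosSq = 4) := by
  refine ⟨four_le_lam1 P, ?_⟩
  rintro ⟨hdom, hpsi⟩
  have hq := cosSq_RQ P hdom hpsi
  refine ⟨le_antisymm ?_ (four_le_lam1 P), hq⟩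
  rw [← hq]
  have hpi := Real.pi_pos
  refine iInf₂_le cosSq ⟨cosSq_testFun, ?_⟩
  rw [cosSq_den]
  simp only [ne_eq, ENNReal.ofReal_eq_zero, not_le]
  positivity
end
end

section
/- Let I be a bounded open interval and let p ∈ L¹(I) be a positive log-concave weight. Then the weighted Neumann eigenvalue and the Dirichlet eigenvalue with measure potential satisfy μ₁(I, p) ≥ λ₁(I, m_p). -/
open MeasureTheory Real Set Filter
open scoped ENNReal

noncomputable section

/-- Rayleigh quotient for the weighted Neumann eigenvalue on `(a,b)` with weight `p`. -/
def neuRQ (a b : ℝ) (p v : ℝ → ℝ) : ℝ≥0∞ :=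
  (∫⁻ x in Ioo a b, ENNReal.ofReal ((deriv v x) ^ 2 * p x)) /
    ∫⁻ x in Ioo a b, ENNReal.ofReal ((v x) ^ 2 * p x)

/-- Admissibility for the weighted Neumann eigenvalue on `(a,b)`:
`v ∈ H¹_loc ∩ L²(p dx)` with zero `p`-mean. -/
def neuAdm (a b : ℝ) (p v : ℝ → ℝ) : Prop :=
  ContDiffOn ℝ 1 v (Ioo a b) ∧
    (∫⁻ x in Ioo a b, ENNReal.ofReal ((v x) ^ 2 * p x)) ≠ 0 ∧
    (∫⁻ x in Ioo a b, ENNReal.ofReal ((v x) ^ 2 * p x)) ≠ ∞ ∧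
    (∫ x in Ioo a b, v x * p x) = 0

/-- `μ₁((a,b), p)`, the first nontrivial weighted Neumann eigenvalue. -/
def mu1 (a b : ℝ) (p : ℝ → ℝ) : ℝ≥0∞ :=
  ⨅ (v : ℝ → ℝ) (_ : neuAdm a b p v), neuRQ a b p v

theorem wn_ibp (c d : ℝ) (hcd : c ≤ d) (ψ : ℝ → ℝ) (ν : Measure ℝ)
    (hmono : MonotoneOn ψ (Icc c d))
    (hν : ∀ x ∈ Icc c d, ∀ y ∈ Icc c d, x ≤ y → ν (Ioc x y) = ENNReal.ofReal (ψ y - ψ x))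
    (f f' : ℝ → ℝ) (hf : ∀ x, HasDerivAt f (f' x) x) (hf' : Continuous f')
    (hfc : f c = 0) (hfd : f d = 0) :
    ∫ x in Ioc c d, f x ∂ν = - ∫ x in Ioc c d, f' x * ψ x := by
  have hfin : IsFiniteMeasure (ν.restrict (Ioc c d)) := by
    constructor
    rw [Measure.restrict_apply_univ, hν c (left_mem_Icc.2 hcd) d (right_mem_Icc.2 hcd) hcd]
    exact ENNReal.ofReal_lt_top
  have h1 : ∀ x ∈ Ioc c d, f x = ∫ t in Ioc c d, (if t < x then f' t else 0) := by
    intro x hx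
    have e1 : ∫ t in c..x, f' t = f x - f c :=
      intervalIntegral.integral_eq_sub_of_hasDerivAt (fun y _ => hf y) (hf'.intervalIntegrable _ _)
    rw [hfc, sub_zero, intervalIntegral.integral_of_le hx.1.le] at e1
    rw [← e1, integral_Ioc_eq_integral_Ioo]
    have : (fun t => if t < x then f' t else 0) = (Iio x).indicator f' := by
      ext t; simp [indicator]
    rw [this, setIntegral_indicator measurableSet_Iio]
    congr 2
    ext t; simp only [mem_Ioo, mem_inter_iff, mem_Ioc, mem_Iio]
    constructor
    · rintro ⟨h1, h2⟩; exact ⟨⟨h1, by linarith [hx.2]⟩, h2⟩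
    · rintro ⟨⟨h1, _⟩, h2⟩; exact ⟨h1, h2⟩
  rw [setIntegral_congr_fun measurableSet_Ioc h1]
  obtain ⟨M, hM⟩ := (isCompact_Icc (a := c) (b := d)).exists_bound_of_continuousOn hf'.continuousOn
  rw [integral_integral_swap]
  · have h2 : ∀ t ∈ Ioc c d, ∫ x in Ioc c d, (if t < x then f' t else 0) ∂ν
        = f' t * ψ d - f' t * ψ t := by
      intro t ht
      have : (fun x => if t < x then f' t else 0) = (Ioi t).indicator (fun _ => f' t) := by
        ext x; simp [indicator]
      rw [this, setIntegral_indicator measurableSet_Ioi, setIntegral_const]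
      have e : Ioc c d ∩ Ioi t = Ioc t d := by
        ext x; simp only [mem_inter_iff, mem_Ioc, mem_Ioi]
        constructor
        · rintro ⟨⟨_, h1⟩, h2⟩; exact ⟨h2, h1⟩
        · rintro ⟨h1, h2⟩; exact ⟨⟨ht.1.trans h1, h2⟩, h1⟩
      have htI : t ∈ Icc c d := Ioc_subset_Icc_self ht
      rw [e, measureReal_def, hν t htI d (right_mem_Icc.2 hcd) ht.2,
        ENNReal.toReal_ofReal (sub_nonneg.2 (hmono htI (right_mem_Icc.2 hcd) ht.2)), smul_eq_mul]
      ring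
    rw [setIntegral_congr_fun measurableSet_Ioc h2, integral_sub, integral_mul_const]
    · have e1 : ∫ t in c..d, f' t = f d - f c :=
        intervalIntegral.integral_eq_sub_of_hasDerivAt (fun y _ => hf y)
          (hf'.intervalIntegrable _ _)
      rw [intervalIntegral.integral_of_le hcd, hfc, hfd] at e1
      rw [e1]; ring
    · exact ((hf'.mul continuous_const).integrableOn_Icc).mono_set Ioc_subset_Icc_self
    · have hi : IntegrableOn ψ (Icc c d) := hmono.integrableOn_isCompact isCompact_Icc
      exact (hi.continuousOn_mul hf'.continuousOn isCompact_Icc).mono_set Ioc_subset_Icc_self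
  · apply Integrable.of_bound (C := M)
    · apply Measurable.aestronglyMeasurable
      apply Measurable.ite
      · exact measurableSet_lt measurable_snd measurable_fst
      · exact hf'.measurable.comp measurable_snd
      · exact measurable_const
    · have hh : ∀ᵐ z ∂((ν.restrict (Ioc c d)).prod (volume.restrict (Ioc c d))), z.2 ∈ Ioc c d := by
        rw [Measure.ae_prod_iff_ae_ae (measurable_snd measurableSet_Ioc)]
        exact Eventually.of_forall fun _ => ae_restrict_mem measurableSet_Ioc
      filter_upwards [hh] with z hz
      have := hM z.2 (Ioc_subset_Icc_self hz)
      simp only [Function.uncurry]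
      split_ifs
      · exact this
      · simpa using (norm_nonneg _).trans this

theorem wn_energy (a b c d : ℝ) (hac : a < c) (hcd : c ≤ d) (hdb : d < b)
    (ψ : ℝ → ℝ) (ν : Measure ℝ)
    (hmono : MonotoneOn ψ (Ioo a b))
    (hν : ∀ x ∈ Ioo a b, ∀ y ∈ Ioo a b, x ≤ y →
      ν (Ioc x y) = ENNReal.ofReal (ψ y - ψ x))
    (u u' : ℝ → ℝ) (hu : ∀ x, HasDerivAt u (u' x) x) (hu' : Continuous u')
    (h0 : ∀ x, x ∉ Ioo c d → u x = 0) (h0' : ∀ x, x ∉ Ioo c d → u' x = 0) :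
    (∫⁻ x in Ioo a b, ENNReal.ofReal ((deriv u x) ^ 2)) +
      ∫⁻ x in Ioo a b, ENNReal.ofReal ((u x) ^ 2) ∂(ν.restrict (Ioo a b) +
        (volume.restrict (Ioo a b)).withDensity fun x => ENNReal.ofReal ((ψ x) ^ 2))
      = ENNReal.ofReal (∫ x in Ioc c d, (u' x - ψ x * u x) ^ 2) := by
  have hsub : Icc c d ⊆ Ioo a b := fun x hx => ⟨hac.trans_le hx.1, hx.2.trans_lt hdb⟩
  have hsub' : Ioc c d ⊆ Ioo a b := Ioc_subset_Icc_self.trans hsub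
  have huc : Continuous u := continuous_iff_continuousAt.2 fun x => (hu x).continuousAt
  have hder : deriv u = u' := funext fun x => (hu x).deriv
  have hres : ∀ (ρ : Measure ℝ) (F : ℝ → ℝ≥0∞), (∀ x, x ∉ Ioo c d → F x = 0) →
      ∫⁻ x in Ioo a b, F x ∂ρ = ∫⁻ x in Ioc c d, F x ∂ρ := by
    intro ρ F hF
    symm
    rw [← lintegral_indicator measurableSet_Ioc, ← lintegral_indicator measurableSet_Ioo]
    congr 1
    ext x
    by_cases hx : x ∈ Ioo c d
    · rw [indicator_of_mem (Ioo_subset_Ioc_self hx),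
        indicator_of_mem (hsub' (Ioo_subset_Ioc_self hx))]
    · simp [indicator, hF x hx]
  have hψm : AEMeasurable ψ (volume.restrict (Ioo a b)) :=
    aemeasurable_restrict_of_monotoneOn measurableSet_Ioo hmono
  have hmI : MonotoneOn ψ (Icc c d) := hmono.mono hsub
  have hψm' : AEStronglyMeasurable ψ (volume.restrict (Ioc c d)) :=
    (hψm.mono_measure (Measure.restrict_mono hsub' le_rfl)).aestronglyMeasurable
  have hfin : IsFiniteMeasure (ν.restrict (Ioc c d)) := by
    constructor
    rw [Measure.restrict_apply_univ, hν c (hsub (left_mem_Icc.2 hcd)) d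
      (hsub (right_mem_Icc.2 hcd)) hcd]
    exact ENNReal.ofReal_lt_top
  rw [hder, Measure.restrict_add, lintegral_add_measure, Measure.restrict_restrict measurableSet_Ioo,
    inter_self, restrict_withDensity measurableSet_Ioo,
    Measure.restrict_restrict measurableSet_Ioo, inter_self,
    lintegral_withDensity_eq_lintegral_mul₀ (by fun_prop) (by fun_prop),
    hres _ _ (fun x hx => by simp [h0' x hx]), hres _ _ (fun x hx => by simp [h0 x hx]),
    hres _ _ (fun x hx => by simp [h0 x hx])]
  have hib := wn_ibp c d hcd ψ ν hmI (fun x hx y hy => hν x (hsub hx) y (hsub hy))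
    (fun x => u x ^ 2) (fun x => 2 * u x * u' x)
    (fun x => by have := (hu x).fun_pow 2; simpa using this) (by fun_prop) (by simp [h0 c])
    (by simp [h0 d])
  have hψi : IntegrableOn ψ (Icc c d) := hmI.integrableOn_isCompact isCompact_Icc
  have hψb : ∀ x ∈ Icc c d, ‖ψ x‖ ≤ |ψ c| + |ψ d| := by
    intro x hx
    have h1 := hmI (left_mem_Icc.2 hcd) hx hx.1
    have h2 := hmI hx (right_mem_Icc.2 hcd) hx.2
    rw [Real.norm_eq_abs, abs_le]
    constructor
    · linarith [neg_abs_le (ψ c), abs_nonneg (ψ d)]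
    · linarith [le_abs_self (ψ d), abs_nonneg (ψ c)]
  have hψi2 : IntegrableOn (fun x => ψ x * ψ x) (Ioc c d) := by
    apply Integrable.bdd_mul (c := |ψ c| + |ψ d|) (hψi.mono_set Ioc_subset_Icc_self) hψm'
    filter_upwards [ae_restrict_mem measurableSet_Ioc] with x hx
    exact hψb x (Ioc_subset_Icc_self hx)
  have i1 : IntegrableOn (fun x => u' x ^ 2) (Ioc c d) :=
    ((hu'.pow 2).integrableOn_Icc).mono_set Ioc_subset_Icc_self
  have i2 : IntegrableOn (fun x => 2 * u x * u' x * ψ x) (Ioc c d) :=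
    (hψi.continuousOn_mul (by fun_prop) isCompact_Icc).mono_set Ioc_subset_Icc_self
  have i3 : IntegrableOn (fun x => ψ x ^ 2 * u x ^ 2) (Ioc c d) := by
    obtain ⟨M, hM⟩ := (isCompact_Icc (a := c) (b := d)).exists_bound_of_continuousOn
      (huc.pow 2).continuousOn
    have : IntegrableOn (fun x => u x ^ 2 * (ψ x * ψ x)) (Ioc c d) := by
      apply Integrable.bdd_mul (c := M) hψi2 (by fun_prop)
      filter_upwards [ae_restrict_mem measurableSet_Ioc] with x hx
      exact hM x (Ioc_subset_Icc_self hx)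
    refine this.congr (Eventually.of_forall fun x => ?_)
    simp only; ring
  have i4 : Integrable (fun x => u x ^ 2) (ν.restrict (Ioc c d)) := by
    obtain ⟨M, hM⟩ := (isCompact_Icc (a := c) (b := d)).exists_bound_of_continuousOn
      (huc.pow 2).continuousOn
    apply Integrable.of_bound (C := M) (by fun_prop)
    filter_upwards [ae_restrict_mem measurableSet_Ioc] with x hx
    exact hM x (Ioc_subset_Icc_self hx)
  have e3 : ∀ x, ((fun x => ENNReal.ofReal (ψ x ^ 2)) * fun x => ENNReal.ofReal (u x ^ 2)) x
      = ENNReal.ofReal (ψ x ^ 2 * u x ^ 2) := fun x => by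
    simp only [Pi.mul_apply]; rw [ENNReal.ofReal_mul (by positivity)]
  simp_rw [e3]
  rw [← ofReal_integral_eq_lintegral_ofReal i1 (Eventually.of_forall fun x => by positivity),
    ← ofReal_integral_eq_lintegral_ofReal i3 (Eventually.of_forall fun x => by positivity),
    ← ofReal_integral_eq_lintegral_ofReal i4 (Eventually.of_forall fun x => by positivity),
    ← ENNReal.ofReal_add (by positivity) (by positivity),
    ← ENNReal.ofReal_add (by positivity) (by positivity), hib]
  congr 1
  have : ∀ x, (u' x - ψ x * u x) ^ 2 = u' x ^ 2 - 2 * u x * u' x * ψ x + ψ x ^ 2 * u x ^ 2 :=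
    fun x => by ring
  simp_rw [this]
  have i12 : IntegrableOn (fun x => u' x ^ 2 - 2 * u x * u' x * ψ x) (Ioc c d) := i1.sub i2
  rw [integral_add i12 i3, integral_sub i1 i2]
  ring

theorem wn_rightcont (a b : ℝ) (ψ : ℝ → ℝ) (ν : Measure ℝ)
    (hmono : MonotoneOn ψ (Ioo a b))
    (hν : ∀ x ∈ Ioo a b, ∀ y ∈ Ioo a b, x ≤ y →
      ν (Ioc x y) = ENNReal.ofReal (ψ y - ψ x)) (x : ℝ) (hx : x ∈ Ioo a b) :
    ContinuousWithinAt ψ (Ici x) x := by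
  obtain ⟨s, hs1, hs2, hs3⟩ := exists_seq_strictAnti_tendsto' hx.2
  have hsI : ∀ n, s n ∈ Ioo a b := fun n => ⟨hx.1.trans (hs2 n).1, (hs2 n).2⟩
  have h1 : Tendsto (fun n => ν (Ioc x (s n))) atTop (nhds (ν (⋂ n, Ioc x (s n)))) := by
    apply tendsto_measure_iInter_atTop
    · exact fun n => measurableSet_Ioc.nullMeasurableSet
    · exact fun m n hmn => Ioc_subset_Ioc_right (hs1.antitone hmn)
    · exact ⟨0, by rw [hν x hx _ (hsI 0) (hs2 0).1.le]; exact ENNReal.ofReal_ne_top⟩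
  have h2 : (⋂ n, Ioc x (s n)) = ∅ := by
    ext y
    simp only [mem_iInter, mem_Ioc, mem_empty_iff_false, iff_false, not_forall]
    by_cases hy : x < y
    · obtain ⟨n, hn⟩ := (hs3.eventually (gt_mem_nhds hy)).exists
      exact ⟨n, fun h => absurd h.2 (not_le.2 hn)⟩
    · exact ⟨0, fun h => hy h.1⟩
  rw [h2, measure_empty] at h1
  rw [Metric.continuousWithinAt_iff]
  intro ε hε
  obtain ⟨n, hn⟩ := (h1.eventually (gt_mem_nhds (ENNReal.ofReal_pos.2 hε))).exists
  rw [hν x hx _ (hsI n) (hs2 n).1.le, ENNReal.ofReal_lt_ofReal_iff hε] at hn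
  refine ⟨s n - x, sub_pos.2 (hs2 n).1, fun {y} hy hd => ?_⟩
  rw [Real.dist_eq, abs_of_nonneg (sub_nonneg.2 hy)] at hd
  have hyI : y ∈ Ioo a b := ⟨hx.1.trans_le hy, by linarith [(hsI n).2]⟩
  have h3 := hmono hx hyI hy
  have h4 := hmono hyI (hsI n) (by linarith)
  rw [Real.dist_eq, abs_of_nonneg (sub_nonneg.2 h3)]
  linarith

theorem wn_slope (f : ℝ → ℝ) (f' x : ℝ) (h : HasDerivWithinAt f f' (Ici x) x) :
    Tendsto (fun n : ℕ => ((n : ℝ) + 1) * (f (x + 1 / ((n : ℝ) + 1)) - f x)) atTop (nhds f') := by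
  rw [hasDerivWithinAt_iff_tendsto_slope, Ici_sdiff_left] at h
  have h1 : Tendsto (fun n : ℕ => x + 1 / ((n : ℝ) + 1)) atTop (nhdsWithin x (Ioi x)) := by
    apply tendsto_nhdsWithin_of_tendsto_nhds_of_eventually_within
    · simpa using (tendsto_const_nhds (x := x)).add (tendsto_one_div_add_atTop_nhds_zero_nat (𝕜 := ℝ))
    · refine Eventually.of_forall fun n => ?_
      have : (0 : ℝ) < 1 / ((n : ℝ) + 1) := by positivity
      simp only [mem_Ioi]; linarith
  refine (h.comp h1).congr fun n => ?_
  simp [slope_def_module]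

theorem wn_lam1_mul (a b : ℝ) (q : Measure ℝ) (v : ℝ → ℝ) (hv : TestFun a b v) :
    lam1 a b q * (∫⁻ x in Ioo a b, ENNReal.ofReal ((v x) ^ 2)) ≤
      (∫⁻ x in Ioo a b, ENNReal.ofReal ((deriv v x) ^ 2)) +
      ∫⁻ x in Ioo a b, ENNReal.ofReal ((v x) ^ 2) ∂q := by
  by_cases h : (∫⁻ x in Ioo a b, ENNReal.ofReal ((v x) ^ 2)) = 0
  · simp [h]
  · apply ENNReal.mul_le_of_le_div
    exact iInf₂_le (f := fun v (_ : TestFun a b v ∧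
      (∫⁻ x in Ioo a b, ENNReal.ofReal ((v x) ^ 2)) ≠ 0) => dirRQ a b q v) v ⟨hv, h⟩

theorem wn_approx (a b c d : ℝ) (hac : a < c) (hcd : c ≤ d) (hdb : d < b)
    (ψ : ℝ → ℝ) (ν : Measure ℝ)
    (hmono : MonotoneOn ψ (Ioo a b))
    (hν : ∀ x ∈ Ioo a b, ∀ y ∈ Ioo a b, x ≤ y →
      ν (Ioc x y) = ENNReal.ofReal (ψ y - ψ x))
    (w r : ℝ → ℝ) (L : ℝ) (hw : Continuous w) (h0 : ∀ x, x ∉ Icc c d → w x = 0)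
    (hr : ∀ x, HasDerivWithinAt w (r x) (Ici x) x) (hL : ∀ x, |r x| ≤ L) :
    lam1 a b (ν.restrict (Ioo a b) +
        (volume.restrict (Ioo a b)).withDensity fun x => ENNReal.ofReal ((ψ x) ^ 2)) *
      ENNReal.ofReal (∫ x in Ioc ((a + c) / 2) ((d + b) / 2), w x ^ 2)
      ≤ ENNReal.ofReal (∫ x in Ioc ((a + c) / 2) ((d + b) / 2), (r x - ψ x * w x) ^ 2) := by
  set c' := (a + c) / 2 with hc'
  set d' := (d + b) / 2 with hd'
  set q := (ν.restrict (Ioo a b) +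
        (volume.restrict (Ioo a b)).withDensity fun x => ENNReal.ofReal ((ψ x) ^ 2)) with hq
  have hac' : a < c' := by rw [hc']; linarith
  have hcc' : c' < c := by rw [hc']; linarith
  have hdd' : d < d' := by rw [hd']; linarith
  have hdb' : d' < b := by rw [hd']; linarith
  have hcd' : c' ≤ d' := by linarith
  have hsub : Icc c' d' ⊆ Ioo a b := fun x hx => ⟨hac'.trans_le hx.1, hx.2.trans_lt hdb'⟩
  have hsub' : Ioc c' d' ⊆ Ioo a b := Ioc_subset_Icc_self.trans hsub
  have hmI : MonotoneOn ψ (Icc c' d') := hmono.mono hsub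
  have hψm : AEStronglyMeasurable ψ (volume.restrict (Ioc c' d')) :=
    ((aemeasurable_restrict_of_monotoneOn measurableSet_Ioo hmono).mono_measure
      (Measure.restrict_mono hsub' le_rfl)).aestronglyMeasurable
  have hψb : ∀ x ∈ Icc c' d', |ψ x| ≤ |ψ c'| + |ψ d'| := by
    intro x hx
    have h1 := hmI (left_mem_Icc.2 hcd') hx hx.1
    have h2 := hmI hx (right_mem_Icc.2 hcd') hx.2
    rw [abs_le]
    constructor
    · linarith [neg_abs_le (ψ c'), abs_nonneg (ψ d')]
    · linarith [le_abs_self (ψ d'), abs_nonneg (ψ c')]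
  have hL0 : 0 ≤ L := (abs_nonneg _).trans (hL 0)
  obtain ⟨W, hW0⟩ := (isCompact_Icc (a := c) (b := d)).exists_bound_of_continuousOn hw.continuousOn
  have hWn : 0 ≤ W := (norm_nonneg _).trans (hW0 c (left_mem_Icc.2 hcd))
  have hW : ∀ x, ‖w x‖ ≤ W := by
    intro x
    by_cases hx : x ∈ Icc c d
    · exact hW0 x hx
    · rw [h0 x hx]; simpa using hWn
  have hlip : ∀ x h, 0 ≤ h → ‖w (x + h) - w x‖ ≤ L * h := by
    intro x h hh
    have := norm_image_sub_le_of_norm_deriv_right_le_segment (f := w) (f' := r) (a := x)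
      (b := x + h) (C := L) hw.continuousOn (fun y _ => hr y) (fun y _ => hL y) (x + h)
      (right_mem_Icc.2 (by linarith))
    simpa using this
  set F : ℝ → ℝ := fun y => ∫ t in (0:ℝ)..y, w t with hF
  have hFd : ∀ x, HasDerivAt F (w x) x := fun x =>
    intervalIntegral.integral_hasDerivAt_right (hw.intervalIntegrable _ _)
      hw.stronglyMeasurable.stronglyMeasurableAtFilter hw.continuousAt
  have hFs : ∀ x y, F y - F x = ∫ t in x..y, w t := fun x y => by
    rw [hF]; exact intervalIntegral.integral_interval_sub_left (hw.intervalIntegrable _ _)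
      (hw.intervalIntegrable _ _)
  set u : ℕ → ℝ → ℝ := fun n x => ((n : ℝ) + 1) * (F (x + 1 / ((n : ℝ) + 1)) - F x) with hu
  set u' : ℕ → ℝ → ℝ := fun n x => ((n : ℝ) + 1) * (w (x + 1 / ((n : ℝ) + 1)) - w x) with hu'
  have hud : ∀ n x, HasDerivAt (u n) (u' n x) x := by
    intro n x
    have h1 : HasDerivAt (fun y => F (y + 1 / ((n : ℝ) + 1))) (w (x + 1 / ((n : ℝ) + 1))) x :=
      HasDerivAt.comp_add_const x _ (hFd _)
    exact (h1.sub (hFd x)).const_mul _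
  have hu'c : ∀ n, Continuous (u' n) := fun n => by rw [hu']; fun_prop
  have huc : ∀ n, Continuous (u n) := fun n =>
    continuous_iff_continuousAt.2 fun x => (hud n x).continuousAt
  have hub : ∀ n x, |u n x| ≤ W := by
    intro n x
    have hn : (0 : ℝ) < (n : ℝ) + 1 := by positivity
    have h1 : ‖∫ t in x..(x + 1 / ((n : ℝ) + 1)), w t‖ ≤ W * |x + 1 / ((n : ℝ) + 1) - x| :=
      intervalIntegral.norm_integral_le_of_norm_le_const fun t _ => hW t
    rw [← hFs, add_sub_cancel_left, abs_of_pos (by positivity), Real.norm_eq_abs] at h1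
    simp only [hu]
    rw [abs_mul, abs_of_pos hn]
    calc _ ≤ ((n : ℝ) + 1) * (W * (1 / ((n : ℝ) + 1))) := by gcongr
      _ = W := by field_simp
  have hu'b : ∀ n x, |u' n x| ≤ L := by
    intro n x
    have hn : (0 : ℝ) < (n : ℝ) + 1 := by positivity
    have h1 := hlip x (1 / ((n : ℝ) + 1)) (by positivity)
    rw [Real.norm_eq_abs] at h1
    simp only [hu']
    rw [abs_mul, abs_of_pos hn]
    calc _ ≤ ((n : ℝ) + 1) * (L * (1 / ((n : ℝ) + 1))) := by gcongr
      _ = L := by field_simp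
  have hul : ∀ x, Tendsto (fun n => u n x) atTop (nhds (w x)) := fun x =>
    wn_slope F (w x) x (hFd x).hasDerivWithinAt
  have hu'l : ∀ x, Tendsto (fun n => u' n x) atTop (nhds (r x)) := fun x =>
    wn_slope w (r x) x (hr x)
  have hev : ∀ᶠ n : ℕ in atTop, 1 / ((n : ℝ) + 1) < c - c' :=
    (tendsto_one_div_add_atTop_nhds_zero_nat (𝕜 := ℝ)).eventually (gt_mem_nhds (by linarith))
  have hineq : ∀ᶠ n in atTop, lam1 a b q * ENNReal.ofReal (∫ x in Ioc c' d', u n x ^ 2)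
      ≤ ENNReal.ofReal (∫ x in Ioc c' d', (u' n x - ψ x * u n x) ^ 2) := by
    filter_upwards [hev] with n hn
    have hn0 : (0 : ℝ) < 1 / ((n : ℝ) + 1) := by positivity
    have hz : ∀ x, x ∉ Ioo c' d' → ∀ t ∈ Icc x (x + 1 / ((n : ℝ) + 1)), w t = 0 := by
      intro x hx t ht
      apply h0
      intro htc
      apply hx
      exact ⟨by linarith [htc.1, ht.2], by linarith [htc.2, ht.1]⟩
    have z1 : ∀ x, x ∉ Ioo c' d' → u n x = 0 := by
      intro x hx
      simp only [hu]
      rw [hFs, intervalIntegral.integral_congr (g := fun _ => 0)]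
      · simp
      · intro t ht
        rw [uIcc_of_le (by linarith)] at ht
        exact hz x hx t ht
    have z2 : ∀ x, x ∉ Ioo c' d' → u' n x = 0 := by
      intro x hx
      simp only [hu']
      rw [hz x hx x ⟨le_rfl, by linarith⟩, hz x hx (x + 1 / ((n : ℝ) + 1)) ⟨by linarith, le_rfl⟩]
      simp
    have htest : TestFun a b (u n) := by
      constructor
      · rw [contDiff_one_iff_deriv]
        refine ⟨fun x => (hud n x).differentiableAt, ?_⟩
        rw [show deriv (u n) = u' n from funext fun x => (hud n x).deriv]
        exact hu'c n
      · intro x hx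
        exact z1 x fun h => hx (hsub (Ioo_subset_Icc_self h))
    rw [← wn_energy a b c' d' hac' hcd' hdb' ψ ν hmono hν (u n) (u' n) (hud n) (hu'c n) z1 z2]
    refine le_trans ?_ (wn_lam1_mul a b q (u n) htest)
    gcongr
    rw [ofReal_integral_eq_lintegral_ofReal]
    · exact lintegral_mono_set hsub'
    · exact (((huc n).pow 2).integrableOn_Icc).mono_set Ioc_subset_Icc_self
    · exact Eventually.of_forall fun x => by positivity
  have t1 : Tendsto (fun n => ∫ x in Ioc c' d', u n x ^ 2) atTop
      (nhds (∫ x in Ioc c' d', w x ^ 2)) := by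
    apply tendsto_integral_of_dominated_convergence (fun _ => W ^ 2)
    · exact fun n => ((huc n).pow 2).aestronglyMeasurable
    · exact integrable_const _
    · intro n
      refine Eventually.of_forall fun x => ?_
      rw [Real.norm_eq_abs, abs_pow]
      have := hub n x
      gcongr
    · exact Eventually.of_forall fun x => (hul x).pow 2
  have t2 : Tendsto (fun n => ∫ x in Ioc c' d', (u' n x - ψ x * u n x) ^ 2) atTop
      (nhds (∫ x in Ioc c' d', (r x - ψ x * w x) ^ 2)) := by
    apply tendsto_integral_of_dominated_convergence
      (fun _ => (L + (|ψ c'| + |ψ d'|) * W) ^ 2)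
    · exact fun n => ((hu'c n).aestronglyMeasurable.sub
        (hψm.mul (huc n).aestronglyMeasurable)).pow 2
    · exact integrable_const _
    · intro n
      filter_upwards [ae_restrict_mem measurableSet_Ioc] with x hx
      rw [Real.norm_eq_abs, abs_pow]
      have h1 := hub n x
      have h2 := hu'b n x
      have h3 := hψb x (Ioc_subset_Icc_self hx)
      have h4 : |ψ x * u n x| ≤ (|ψ c'| + |ψ d'|) * W := by
        rw [abs_mul]; gcongr
      have h5 := abs_sub (u' n x) (ψ x * u n x)
      gcongr
      linarith
    · exact Eventually.of_forall fun x => ((hu'l x).sub (tendsto_const_nhds.mul (hul x))).pow 2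
  by_cases hzero : ENNReal.ofReal (∫ x in Ioc c' d', w x ^ 2) = 0
  · rw [hzero]; simp
  · exact le_of_tendsto_of_tendsto
      (ENNReal.Tendsto.const_mul (ENNReal.tendsto_ofReal t1) (Or.inl hzero))
      (ENNReal.tendsto_ofReal t2) hineq

theorem wn_G (a b : ℝ) (p : ℝ → ℝ)
    (hpos : ∀ x ∈ Ioo a b, 0 < p x)
    (hlc : ConcaveOn ℝ (Ioo a b) (fun x => Real.log (p x)))
    (ψ : ℝ → ℝ) (ν : Measure ℝ)
    (hmono : MonotoneOn ψ (Ioo a b))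
    (hψ : ∀ x ∈ Ioo a b, ∀ y ∈ Ioo a b,
      Real.log (p y) - Real.log (p x) = -2 * ∫ t in x..y, ψ t)
    (hν : ∀ x ∈ Ioo a b, ∀ y ∈ Ioo a b, x ≤ y →
      ν (Ioc x y) = ENNReal.ofReal (ψ y - ψ x))
    (c d : ℝ) (hac : a < c) (hcd : c ≤ d) (hdb : d < b)
    (G G' : ℝ → ℝ) (hG : ∀ x ∈ Ioo a b, HasDerivAt G (G' x) x)
    (hG'c : ContinuousOn G' (Ioo a b))
    (h0 : ∀ x ∈ Ioo a b, x ∉ Icc c d → G x = 0) :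
    lam1 a b (ν.restrict (Ioo a b) +
        (volume.restrict (Ioo a b)).withDensity fun x => ENNReal.ofReal ((ψ x) ^ 2)) *
      ENNReal.ofReal (∫ x in Ioc ((a + c) / 2) ((d + b) / 2), G x ^ 2 / p x)
      ≤ ENNReal.ofReal (∫ x in Ioc ((a + c) / 2) ((d + b) / 2), G' x ^ 2 / p x) := by
  have hlogc : ContinuousOn (fun x => Real.log (p x)) (Ioo a b) := hlc.continuousOn isOpen_Ioo
  set φ : ℝ → ℝ := fun x => Real.exp (-(Real.log (p x)) / 2) with hφ
  have hφc : ContinuousOn φ (Ioo a b) := by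
    rw [hφ]; exact Real.continuous_exp.comp_continuousOn (hlogc.neg.div_const 2)
  have hφ2 : ∀ x ∈ Ioo a b, φ x ^ 2 = 1 / p x := by
    intro x hx
    simp only [hφ]
    rw [← Real.exp_nat_mul]
    rw [show ((2:ℕ):ℝ) * (-(Real.log (p x)) / 2) = - Real.log (p x) by push_cast; ring,
      Real.exp_neg, Real.exp_log (hpos x hx), one_div]
  have hlogd : ∀ x ∈ Ioo a b,
      HasDerivWithinAt (fun x => Real.log (p x)) (-2 * ψ x) (Ici x) x := by
    intro x hx
    have hm : StronglyMeasurableAtFilter ψ (nhdsWithin x (Ioi x)) volume := by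
      refine ⟨Ioo a b, mem_nhdsWithin_of_mem_nhds (isOpen_Ioo.mem_nhds hx), ?_⟩
      exact (aemeasurable_restrict_of_monotoneOn measurableSet_Ioo hmono).aestronglyMeasurable
    have hcw : ContinuousWithinAt ψ (Ioi x) x :=
      (wn_rightcont a b ψ ν hmono hν x hx).mono Ioi_subset_Ici_self
    have h1 : HasDerivWithinAt (fun y => ∫ t in x..y, ψ t) (ψ x) (Ici x) x :=
      intervalIntegral.integral_hasDerivWithinAt_right IntervalIntegrable.refl hm hcw
    have h2 := (h1.const_mul (-2)).const_add (Real.log (p x))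
    refine h2.congr_of_eventuallyEq ?_ (by simp)
    filter_upwards [mem_nhdsWithin_of_mem_nhds (isOpen_Ioo.mem_nhds hx)] with y hy
    linarith [hψ x hx y hy]
  have hφd : ∀ x ∈ Ioo a b, HasDerivWithinAt φ (ψ x * φ x) (Ici x) x := by
    intro x hx
    have := (((hlogd x hx).neg).div_const 2).exp
    refine this.congr_deriv ?_
    simp only [hφ, Pi.neg_apply]; ring
  have hcdsub : Icc c d ⊆ Ioo a b := fun x hx => ⟨hac.trans_le hx.1, hx.2.trans_lt hdb⟩
  have hG'0 : ∀ x ∈ Ioo a b, x ∉ Icc c d → G' x = 0 := by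
    intro x hx hx'
    have h1 : G =ᶠ[nhds x] fun _ => 0 := by
      filter_upwards [isOpen_Ioo.mem_nhds hx, isClosed_Icc.isOpen_compl.mem_nhds hx'] with y hy hy'
      exact h0 y hy hy'
    exact (hG x hx).unique ((hasDerivAt_const x (0:ℝ)).congr_of_eventuallyEq h1)
  have hGc : ContinuousOn G (Ioo a b) := fun x hx => (hG x hx).continuousAt.continuousWithinAt
  classical
  set w : ℝ → ℝ := fun x => if x ∈ Ioo a b then φ x * G x else 0 with hw
  set r : ℝ → ℝ := fun x => if x ∈ Ioo a b then ψ x * φ x * G x + φ x * G' x else 0 with hr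
  have hwz : ∀ x, x ∉ Icc c d → w x = 0 := by
    intro x hx
    simp only [hw]
    split_ifs with h
    · rw [h0 x h hx, mul_zero]
    · rfl
  have hrz : ∀ x, x ∉ Icc c d → r x = 0 := by
    intro x hx
    simp only [hr]
    split_ifs with h
    · rw [h0 x h hx, hG'0 x h hx]; simp
    · rfl
  have hwe : ∀ x ∈ Ioo a b, w =ᶠ[nhds x] fun y => φ y * G y := by
    intro x hx
    filter_upwards [isOpen_Ioo.mem_nhds hx] with y hy
    simp only [hw, if_pos hy]
  have hwe0 : ∀ x, x ∉ Icc c d → w =ᶠ[nhds x] fun _ => 0 := by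
    intro x hx
    filter_upwards [isClosed_Icc.isOpen_compl.mem_nhds hx] with y hy
    exact hwz y hy
  have hwc : Continuous w := by
    rw [continuous_iff_continuousAt]
    intro x
    by_cases hx : x ∈ Icc c d
    · have hx' := hcdsub hx
      exact (((hφc.continuousAt (isOpen_Ioo.mem_nhds hx')).mul (hG x hx').continuousAt)).congr
        (hwe x hx').symm
    · exact continuousAt_const.congr (hwe0 x hx).symm
  have hwr : ∀ x, HasDerivWithinAt w (r x) (Ici x) x := by
    intro x
    by_cases hx : x ∈ Icc c d
    · have hx' := hcdsub hx
      have h1 := (hφd x hx').mul (hG x hx').hasDerivWithinAt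
      have h2 := h1.congr_of_eventuallyEq (f₁ := w)
        (nhdsWithin_le_nhds (hwe x hx')) (by simp only [hw, if_pos hx']; rfl)
      refine h2.congr_deriv ?_
      simp only [hr, if_pos hx']
    · rw [hrz x hx]
      exact ((hasDerivAt_const x (0:ℝ)).congr_of_eventuallyEq (hwe0 x hx)).hasDerivWithinAt
  obtain ⟨M1, hM1⟩ := (isCompact_Icc (a := c) (b := d)).exists_bound_of_continuousOn
    ((hφc.mul hGc).mono hcdsub)
  obtain ⟨M2, hM2⟩ := (isCompact_Icc (a := c) (b := d)).exists_bound_of_continuousOn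
    ((hφc.mul hG'c).mono hcdsub)
  have hM1n : 0 ≤ M1 := (norm_nonneg _).trans (hM1 c (left_mem_Icc.2 hcd))
  have hM2n : 0 ≤ M2 := (norm_nonneg _).trans (hM2 c (left_mem_Icc.2 hcd))
  have hmI : MonotoneOn ψ (Icc c d) := hmono.mono hcdsub
  have hrb : ∀ x, |r x| ≤ (|ψ c| + |ψ d|) * M1 + M2 := by
    intro x
    by_cases hx : x ∈ Icc c d
    · have h1 := hmI (left_mem_Icc.2 hcd) hx hx.1
      have h2 := hmI hx (right_mem_Icc.2 hcd) hx.2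
      have h3 : |ψ x| ≤ |ψ c| + |ψ d| := by
        rw [abs_le]
        constructor
        · linarith [neg_abs_le (ψ c), abs_nonneg (ψ d)]
        · linarith [le_abs_self (ψ d), abs_nonneg (ψ c)]
      have h4 : |φ x * G x| ≤ M1 := hM1 x hx
      have h5 : |φ x * G' x| ≤ M2 := hM2 x hx
      simp only [hr, if_pos (hcdsub hx)]
      refine (abs_add_le _ _).trans ?_
      rw [mul_assoc, abs_mul (ψ x)]
      gcongr
    · rw [hrz x hx, abs_zero]; positivity
  have hfin := wn_approx a b c d hac hcd hdb ψ ν hmono hν w r _ hwc hwz hwr hrb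
  have hsub : ∀ x ∈ Ioc ((a + c) / 2) ((d + b) / 2), x ∈ Ioo a b := fun x hx =>
    ⟨by linarith [hx.1], by linarith [hx.2]⟩
  have e1 : ∫ x in Ioc ((a + c) / 2) ((d + b) / 2), G x ^ 2 / p x
      = ∫ x in Ioc ((a + c) / 2) ((d + b) / 2), w x ^ 2 := by
    refine setIntegral_congr_fun measurableSet_Ioc fun x hx => ?_
    simp only [hw, if_pos (hsub x hx)]
    rw [mul_pow, hφ2 x (hsub x hx)]; ring
  have e2 : ∫ x in Ioc ((a + c) / 2) ((d + b) / 2), G' x ^ 2 / p x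
      = ∫ x in Ioc ((a + c) / 2) ((d + b) / 2), (r x - ψ x * w x) ^ 2 := by
    refine setIntegral_congr_fun measurableSet_Ioc fun x hx => ?_
    simp only [hw, hr, if_pos (hsub x hx)]
    rw [show ψ x * φ x * G x + φ x * G' x - ψ x * (φ x * G x) = φ x * G' x by ring,
      mul_pow, hφ2 x (hsub x hx)]; ring
  rw [e1, e2]
  exact hfin

theorem wn_trunc (ε : ℝ) (hε : 0 < ε) : ∃ T h : ℝ → ℝ, (∀ s, HasDerivAt T (h s) s) ∧
    Continuous h ∧ (∀ s, 0 ≤ h s) ∧ (∀ s, h s ≤ 1) ∧ (∀ s, |s| ≤ ε → T s = 0) ∧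
    (∀ s, |s| ≤ ε → h s = 0) ∧ (∀ s, 2 * ε ≤ |s| → h s = 1) := by
  set h : ℝ → ℝ := fun s => max 0 (min 1 (|s| / ε - 1)) with hh
  have hc : Continuous h := by rw [hh]; fun_prop
  have hz : ∀ t, |t| ≤ ε → h t = 0 := by
    intro t h1
    have h2 : |t| / ε ≤ 1 := (div_le_one hε).2 h1
    simp only [hh]
    exact max_eq_left ((min_le_right _ _).trans (by linarith))
  refine ⟨fun s => ∫ t in (0:ℝ)..s, h t, h, fun s =>
    intervalIntegral.integral_hasDerivAt_right (hc.intervalIntegrable _ _)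
      hc.stronglyMeasurable.stronglyMeasurableAtFilter hc.continuousAt, hc,
    fun s => le_max_left _ _, fun s => max_le zero_le_one (min_le_left _ _), ?_, hz, ?_⟩
  · intro s hs
    beta_reduce
    rw [intervalIntegral.integral_congr (g := fun _ => 0)]
    · simp
    · intro t ht
      have h1 : |t| ≤ ε := by
        rw [abs_le] at hs ⊢
        rw [mem_uIcc] at ht
        rcases ht with ht | ht
        · exact ⟨by linarith, by linarith⟩
        · exact ⟨by linarith, by linarith⟩
      exact hz t h1
  · intro s hs
    have h2 : 2 ≤ |s| / ε := (le_div_iff₀ hε).2 hs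
    simp only [hh]
    rw [min_eq_left (by linarith), max_eq_right zero_le_one]

theorem wn_step (a b : ℝ) (p : ℝ → ℝ)
    (hpos : ∀ x ∈ Ioo a b, 0 < p x)
    (hlc : ConcaveOn ℝ (Ioo a b) (fun x => Real.log (p x)))
    (hpc : ContinuousOn p (Ioo a b))
    (ψ : ℝ → ℝ) (ν : Measure ℝ)
    (hmono : MonotoneOn ψ (Ioo a b))
    (hψ : ∀ x ∈ Ioo a b, ∀ y ∈ Ioo a b,
      Real.log (p y) - Real.log (p x) = -2 * ∫ t in x..y, ψ t)
    (hν : ∀ x ∈ Ioo a b, ∀ y ∈ Ioo a b, x ≤ y →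
      ν (Ioc x y) = ENNReal.ofReal (ψ y - ψ x))
    (c d : ℝ) (hac : a < c) (hcd : c ≤ d) (hdb : d < b)
    (v v' g : ℝ → ℝ) (hv : ∀ x ∈ Ioo a b, HasDerivAt v (v' x) x)
    (hv'c : ContinuousOn v' (Ioo a b))
    (hg : ∀ x ∈ Ioo a b, HasDerivAt g (v x * p x) x)
    (ε : ℝ) (hgε : ∀ x ∈ Ioo a b, x ∉ Icc c d → |g x| ≤ ε)
    (T h : ℝ → ℝ) (hT : ∀ s, HasDerivAt T (h s) s) (hc : Continuous h)
    (hh0 : ∀ s, 0 ≤ h s) (hh1 : ∀ s, h s ≤ 1)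
    (hTz : ∀ s, |s| ≤ ε → T s = 0) (hhz : ∀ s, |s| ≤ ε → h s = 0) :
    lam1 a b (ν.restrict (Ioo a b) +
        (volume.restrict (Ioo a b)).withDensity fun x => ENNReal.ofReal ((ψ x) ^ 2)) *
      (∫⁻ x in Ioo a b, ENNReal.ofReal (h (g x) * (v x ^ 2 * p x)))
      ≤ ∫⁻ x in Ioo a b, ENNReal.ofReal (v' x ^ 2 * p x) := by
  set lam := lam1 a b (ν.restrict (Ioo a b) +
        (volume.restrict (Ioo a b)).withDensity fun x => ENNReal.ofReal ((ψ x) ^ 2)) with hlam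
  have hgc : ContinuousOn g (Ioo a b) := fun x hx => (hg x hx).continuousAt.continuousWithinAt
  have hvc : ContinuousOn v (Ioo a b) := fun x hx => (hv x hx).continuousAt.continuousWithinAt
  have hhg : ContinuousOn (fun x => h (g x)) (Ioo a b) := hc.comp_continuousOn hgc
  set G : ℝ → ℝ := fun x => T (g x) with hG
  set G' : ℝ → ℝ := fun x => h (g x) * (v x * p x) with hG'
  have hGd : ∀ x ∈ Ioo a b, HasDerivAt G (G' x) x := fun x hx => (hT (g x)).comp x (hg x hx)
  have hGc : ContinuousOn G (Ioo a b) := fun x hx => (hGd x hx).continuousAt.continuousWithinAt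
  have hG'c : ContinuousOn G' (Ioo a b) := hhg.mul (hvc.mul hpc)
  have hA := wn_G a b p hpos hlc ψ ν hmono hψ hν c d hac hcd hdb G G' hGd hG'c
    (fun x hx hx' => hTz _ (hgε x hx hx'))
  rw [← hlam] at hA
  set c' := (a + c) / 2 with hc'
  set d' := (d + b) / 2 with hd'
  have hac' : a < c' := by rw [hc']; linarith
  have hcc' : c' < c := by rw [hc']; linarith
  have hdd' : d < d' := by rw [hd']; linarith
  have hdb' : d' < b := by rw [hd']; linarith
  have hcd' : c' ≤ d' := by linarith
  have hsub : Icc c' d' ⊆ Ioo a b := fun x hx => ⟨hac'.trans_le hx.1, hx.2.trans_lt hdb'⟩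
  have hsub' : Ioc c' d' ⊆ Ioo a b := Ioc_subset_Icc_self.trans hsub
  have hint : ∀ F : ℝ → ℝ, ContinuousOn F (Ioo a b) → IntegrableOn F (Ioc c' d') :=
    fun F hF => ((hF.mono hsub).integrableOn_Icc).mono_set Ioc_subset_Icc_self
  have hpne : ∀ x ∈ Ioo a b, p x ≠ 0 := fun x hx => (hpos x hx).ne'
  set A := ∫ x in Ioc c' d', h (g x) * (v x ^ 2 * p x) with hAdef
  set B := ∫ x in Ioc c' d', G x ^ 2 / p x with hBdef
  set D := ∫ x in Ioc c' d', v' x ^ 2 * p x with hDdef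
  have iA : IntegrableOn (fun x => h (g x) * (v x ^ 2 * p x)) (Ioc c' d') :=
    hint _ (hhg.mul ((hvc.pow 2).mul hpc))
  have iB : IntegrableOn (fun x => G x ^ 2 / p x) (Ioc c' d') :=
    hint _ ((hGc.pow 2).div hpc hpne)
  have iD : IntegrableOn (fun x => v' x ^ 2 * p x) (Ioc c' d') :=
    hint _ ((hv'c.pow 2).mul hpc)
  have iC : IntegrableOn (fun x => v' x * G x) (Ioc c' d') := hint _ (hv'c.mul hGc)
  have hibp : A = - ∫ x in Ioc c' d', v' x * G x := by
    have h1 := intervalIntegral.integral_mul_deriv_eq_deriv_mul (a := c') (b := d')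
      (u := v) (u' := v') (v := G) (v' := G')
      (fun x hx => hv x (hsub (by rwa [uIcc_of_le hcd'] at hx)))
      (fun x hx => hGd x (hsub (by rwa [uIcc_of_le hcd'] at hx)))
      ((hv'c.mono hsub).intervalIntegrable_of_Icc hcd')
      ((hG'c.mono hsub).intervalIntegrable_of_Icc hcd')
    have z1 : G c' = 0 := hTz _ (hgε c' (hsub (left_mem_Icc.2 hcd')) fun hx => by
      linarith [hx.1])
    have z2 : G d' = 0 := hTz _ (hgε d' (hsub (right_mem_Icc.2 hcd')) fun hx => by
      linarith [hx.2])
    rw [z1, z2, intervalIntegral.integral_of_le hcd', intervalIntegral.integral_of_le hcd'] at h1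
    have h2 : A = ∫ x in Ioc c' d', v x * G' x := by
      rw [hAdef]
      refine setIntegral_congr_fun measurableSet_Ioc fun x hx => ?_
      simp only [hG']; ring
    rw [h2, h1]; ring
  have hA0 : 0 ≤ A := setIntegral_nonneg measurableSet_Ioc fun x hx =>
    mul_nonneg (hh0 _) (mul_nonneg (sq_nonneg _) (hpos x (hsub' hx)).le)
  have hD0 : 0 ≤ D := setIntegral_nonneg measurableSet_Ioc fun x hx =>
    mul_nonneg (sq_nonneg _) (hpos x (hsub' hx)).le
  have hCS : A ^ 2 ≤ D * B := by
    have hq : ∀ s : ℝ, 0 ≤ B * (s * s) + (-2 * A) * s + D := by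
      intro s
      have h1 : 0 ≤ ∫ x in Ioc c' d', (v' x * p x + s * G x) ^ 2 / p x :=
        setIntegral_nonneg measurableSet_Ioc fun x hx =>
          div_nonneg (sq_nonneg _) (hpos x (hsub' hx)).le
      have h2 : ∫ x in Ioc c' d', (v' x * p x + s * G x) ^ 2 / p x
          = ∫ x in Ioc c' d', (v' x ^ 2 * p x + (2 * s) * (v' x * G x)
            + s ^ 2 * (G x ^ 2 / p x)) := by
        refine setIntegral_congr_fun measurableSet_Ioc fun x hx => ?_
        have := hpne x (hsub' hx)
        field_simp
        ring
      have i2 : IntegrableOn (fun x => v' x ^ 2 * p x + (2 * s) * (v' x * G x)) (Ioc c' d') :=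
        iD.add (iC.const_mul _)
      rw [h2, integral_add i2 (iB.const_mul _), integral_add iD (iC.const_mul _),
        integral_const_mul, integral_const_mul] at h1
      rw [hibp]
      linarith
    have := discrim_le_zero hq
    rw [discrim] at this
    nlinarith
  have hE : ∫ x in Ioc c' d', G' x ^ 2 / p x ≤ A := by
    refine setIntegral_mono_on (hint _ ((hG'c.pow 2).div hpc hpne)) iA measurableSet_Ioc
      fun x hx => ?_
    have hp := hpos x (hsub' hx)
    have e : G' x ^ 2 / p x = h (g x) * (h (g x) * (v x ^ 2 * p x)) := by
      simp only [hG']; field_simp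
    rw [e]
    exact mul_le_of_le_one_left (mul_nonneg (hh0 _) (mul_nonneg (sq_nonneg _) hp.le)) (hh1 _)
  have hlA : lam * ENNReal.ofReal B ≤ ENNReal.ofReal A :=
    hA.trans (ENNReal.ofReal_le_ofReal hE)
  have key : lam * ENNReal.ofReal A ≤ ENNReal.ofReal D := by
    rcases hA0.eq_or_lt with h0 | h0
    · rw [← h0]; simp
    · have hA1 : ENNReal.ofReal A ≠ 0 := (ENNReal.ofReal_pos.2 h0).ne'
      rw [← ENNReal.mul_le_mul_iff_left hA1 ENNReal.ofReal_ne_top]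
      calc lam * ENNReal.ofReal A * ENNReal.ofReal A = lam * ENNReal.ofReal (A ^ 2) := by
            rw [mul_assoc, ← ENNReal.ofReal_mul hA0, sq]
        _ ≤ lam * ENNReal.ofReal (D * B) := by gcongr
        _ = ENNReal.ofReal D * (lam * ENNReal.ofReal B) := by
            rw [ENNReal.ofReal_mul hD0]; ring
        _ ≤ ENNReal.ofReal D * ENNReal.ofReal A := by gcongr
  have eA : ∫⁻ x in Ioo a b, ENNReal.ofReal (h (g x) * (v x ^ 2 * p x)) = ENNReal.ofReal A := by
    rw [ofReal_integral_eq_lintegral_ofReal iA]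
    · symm
      rw [← lintegral_indicator measurableSet_Ioc, ← lintegral_indicator measurableSet_Ioo]
      congr 1
      ext x
      by_cases hx : x ∈ Ioc c' d'
      · rw [indicator_of_mem hx, indicator_of_mem (hsub' hx)]
      · rw [indicator_of_notMem hx]
        by_cases hx' : x ∈ Ioo a b
        · rw [indicator_of_mem hx', hhz _ (hgε x hx' fun hx2 => hx
            ⟨hcc'.trans_le hx2.1, hx2.2.trans hdd'.le⟩)]
          simp
        · rw [indicator_of_notMem hx']
    · filter_upwards [ae_restrict_mem measurableSet_Ioc] with x hx
      exact mul_nonneg (hh0 _) (mul_nonneg (sq_nonneg _) (hpos x (hsub' hx)).le)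
  rw [eA]
  refine key.trans ?_
  rw [hDdef, ofReal_integral_eq_lintegral_ofReal iD]
  · exact lintegral_mono_set hsub'
  · filter_upwards [ae_restrict_mem measurableSet_Ioc] with x hx
    exact mul_nonneg (sq_nonneg _) (hpos x (hsub' hx)).le

theorem wn_countable (s : Set ℝ) (g g' : ℝ → ℝ) (hg : ∀ x ∈ s, HasDerivAt g (g' x) x) :
    {x | x ∈ s ∧ g x = 0 ∧ g' x ≠ 0}.Countable := by
  have : DiscreteTopology ↥{x | x ∈ s ∧ g x = 0 ∧ g' x ≠ 0} := by
    rw [discreteTopology_subtype_iff]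
    rintro x ⟨hx, hx0, hx1⟩
    have h1 : ∀ᶠ z in nhdsWithin x {x}ᶜ, g z ≠ 0 := (hg x hx).eventually_ne hx1
    rw [← disjoint_iff, disjoint_principal_right]
    filter_upwards [h1] with z hz hz'
    exact hz hz'.2.1
  exact countable_coe_iff.1 (TopologicalSpace.separableSpace_iff_countable.1 inferInstance)

/-- Lemma 2.1 / `l:ml`: for a positive log-concave weight `p ∈ L¹(I)` on a
bounded open interval `I = (a,b)`, it holds `μ₁(I, p) ≥ λ₁(I, m_p)`, where
`m_p = ψ_p' + ψ_p²` and `ψ_p = -(1/2)(log p)'`. Here `ψ_p` is encoded as a monotone function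
`ψ` with `log p(y) - log p(x) = -2∫_x^y ψ` and `ν` is its distributional derivative measure. -/
theorem weighted_neumann_ge_dirichlet_with_potential
    (a b : ℝ) (hab : a < b) (p : ℝ → ℝ)
    (hpos : ∀ x ∈ Ioo a b, 0 < p x)
    (hint : IntegrableOn p (Ioo a b))
    (hlc : ConcaveOn ℝ (Ioo a b) (fun x => Real.log (p x)))
    (ψ : ℝ → ℝ) (ν : Measure ℝ)
    (hmono : MonotoneOn ψ (Ioo a b))
    (hψ : ∀ x ∈ Ioo a b, ∀ y ∈ Ioo a b,
      Real.log (p y) - Real.log (p x) = -2 * ∫ t in x..y, ψ t)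
    (hν : ∀ x ∈ Ioo a b, ∀ y ∈ Ioo a b, x ≤ y →
      ν (Ioc x y) = ENNReal.ofReal (ψ y - ψ x)) :
    lam1 a b (ν.restrict (Ioo a b) +
        (volume.restrict (Ioo a b)).withDensity fun x => ENNReal.ofReal ((ψ x) ^ 2)) ≤
      mu1 a b p := by
  have hlogc : ContinuousOn (fun x => Real.log (p x)) (Ioo a b) := hlc.continuousOn isOpen_Ioo
  have hpc : ContinuousOn p (Ioo a b) :=
    (Real.continuous_exp.comp_continuousOn hlogc).congr fun x hx =>
      (Real.exp_log (hpos x hx)).symm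
  refine le_iInf₂ fun v hv => ?_
  obtain ⟨hv1, hN0, hNt, hmean⟩ := hv
  rw [neuRQ, ENNReal.le_div_iff_mul_le (Or.inl hN0) (Or.inl hNt)]
  have hvd : ∀ x ∈ Ioo a b, HasDerivAt v (deriv v x) x := fun x hx =>
    ((hv1.differentiableOn (by simp)).differentiableAt (isOpen_Ioo.mem_nhds hx)).hasDerivAt
  have hv'c : ContinuousOn (deriv v) (Ioo a b) :=
    hv1.continuousOn_deriv_of_isOpen isOpen_Ioo le_rfl
  have hvc : ContinuousOn v (Ioo a b) := hv1.continuousOn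
  have hvpc : ContinuousOn (fun x => v x * p x) (Ioo a b) := hvc.mul hpc
  have hv2i : IntegrableOn (fun x => v x ^ 2 * p x) (Ioo a b) := by
    refine ⟨((hvc.pow 2).mul hpc).aestronglyMeasurable measurableSet_Ioo, ?_⟩
    rw [hasFiniteIntegral_iff_ofReal]
    · exact lt_top_iff_ne_top.2 hNt
    · filter_upwards [ae_restrict_mem measurableSet_Ioo] with x hx
      exact mul_nonneg (sq_nonneg _) (hpos x hx).le
  have hvpi : IntegrableOn (fun x => v x * p x) (Ioo a b) := by
    refine Integrable.mono' (hv2i.add hint) (hvpc.aestronglyMeasurable measurableSet_Ioo) ?_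
    filter_upwards [ae_restrict_mem measurableSet_Ioo] with x hx
    have hp := hpos x hx
    rw [Real.norm_eq_abs, abs_mul, abs_of_pos hp]
    simp only [Pi.add_apply]
    have h1 : |v x| ≤ v x ^ 2 + 1 := by nlinarith [sq_abs (v x), sq_nonneg (|v x| - 1)]
    nlinarith
  have hii : IntervalIntegrable (fun x => v x * p x) volume a b := by
    rw [intervalIntegrable_iff_integrableOn_Ioo_of_le hab.le]; exact hvpi
  set g : ℝ → ℝ := fun x => ∫ t in a..x, v t * p t with hg
  have hgd : ∀ x ∈ Ioo a b, HasDerivAt g (v x * p x) x := by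
    intro x hx
    refine intervalIntegral.integral_hasDerivAt_right
      (hii.mono_set ?_) ?_ (hvpc.continuousAt (isOpen_Ioo.mem_nhds hx))
    · rw [uIcc_of_le hx.1.le, uIcc_of_le hab.le]; exact Icc_subset_Icc_right hx.2.le
    · exact ⟨Ioo a b, isOpen_Ioo.mem_nhds hx, hvpc.aestronglyMeasurable measurableSet_Ioo⟩
  have hgcont : ContinuousOn g (Icc a b) := by
    have := intervalIntegral.continuousOn_primitive_interval' hii left_mem_uIcc
    rwa [uIcc_of_le hab.le] at this
  have hga : g a = 0 := by simp [hg]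
  have hgb : g b = 0 := by
    simp only [hg]
    rw [intervalIntegral.integral_of_le hab.le, integral_Ioc_eq_integral_Ioo, hmean]
  have hloc : ∀ ε : ℝ, 0 < ε → ∃ c d : ℝ, a < c ∧ c ≤ d ∧ d < b ∧
      ∀ x ∈ Ioo a b, x ∉ Icc c d → |g x| ≤ ε := by
    intro ε hε
    obtain ⟨δ, hδ, h1⟩ := Metric.continuousWithinAt_iff.1 (hgcont a (left_mem_Icc.2 hab.le)) ε hε
    obtain ⟨δ', hδ', h2⟩ :=
      Metric.continuousWithinAt_iff.1 (hgcont b (right_mem_Icc.2 hab.le)) ε hε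
    refine ⟨min (a + δ) ((a + b) / 2), max (b - δ') ((a + b) / 2), ?_, ?_, ?_, ?_⟩
    · exact lt_min (by linarith) (by linarith)
    · exact (min_le_right _ _).trans (le_max_right _ _)
    · exact max_lt (by linarith) (by linarith)
    · intro x hx hx'
      rw [mem_Icc, not_and_or, not_le, not_le] at hx'
      rcases hx' with hx' | hx'
      · have h3 := h1 (Ioo_subset_Icc_self hx) (by
          rw [Real.dist_eq, abs_of_pos (by linarith [hx.1])]
          linarith [min_le_left (a + δ) ((a + b) / 2)])
        rw [hga, dist_zero_right] at h3
        exact h3.le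
      · have h3 := h2 (Ioo_subset_Icc_self hx) (by
          rw [Real.dist_eq, abs_of_neg (by linarith [hx.2])]
          linarith [le_max_left (b - δ') ((a + b) / 2)])
        rw [hgb, dist_zero_right] at h3
        exact h3.le
  have hεpos : ∀ n : ℕ, (0 : ℝ) < 1 / ((n : ℝ) + 1) := fun n => by positivity
  choose T h hT hhc hh0 hh1 hTz hhz hho using fun n : ℕ => wn_trunc (1 / ((n : ℝ) + 1)) (hεpos n)
  have hstep : ∀ n, lam1 a b (ν.restrict (Ioo a b) +
        (volume.restrict (Ioo a b)).withDensity fun x => ENNReal.ofReal ((ψ x) ^ 2)) *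
      (∫⁻ x in Ioo a b, ENNReal.ofReal (h n (g x) * (v x ^ 2 * p x)))
      ≤ ∫⁻ x in Ioo a b, ENNReal.ofReal (deriv v x ^ 2 * p x) := by
    intro n
    obtain ⟨c, d, hac, hcd, hdb, hε⟩ := hloc _ (hεpos n)
    exact wn_step a b p hpos hlc hpc ψ ν hmono hψ hν c d hac hcd hdb v (deriv v) g hvd hv'c hgd
      _ hε (T n) (h n) (hT n) (hhc n) (hh0 n) (hh1 n) (hTz n) (hhz n)
  have hlim : Tendsto (fun n => ∫⁻ x in Ioo a b, ENNReal.ofReal (h n (g x) * (v x ^ 2 * p x)))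
      atTop (nhds (∫⁻ x in Ioo a b, ENNReal.ofReal (v x ^ 2 * p x))) := by
    refine tendsto_lintegral_of_dominated_convergence'
      (fun x => ENNReal.ofReal (v x ^ 2 * p x)) ?_ ?_ hNt ?_
    · intro n
      apply AEMeasurable.ennreal_ofReal
      refine ContinuousOn.aemeasurable ?_ measurableSet_Ioo
      exact ((hhc n).comp_continuousOn (hgcont.mono Ioo_subset_Icc_self)).mul ((hvc.pow 2).mul hpc)
    · intro n
      filter_upwards [ae_restrict_mem measurableSet_Ioo] with x hx
      exact ENNReal.ofReal_le_ofReal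
        (mul_le_of_le_one_left (mul_nonneg (sq_nonneg _) (hpos x hx).le) (hh1 n _))
    · have hcount := (wn_countable (Ioo a b) g (fun x => v x * p x) hgd).ae_notMem
        (volume.restrict (Ioo a b))
      filter_upwards [hcount, ae_restrict_mem measurableSet_Ioo] with x hx1 hx
      by_cases hgx : g x = 0
      · have hv0 : v x * p x = 0 := by
          by_contra hne
          exact hx1 ⟨hx, hgx, hne⟩
        have hz : v x ^ 2 * p x = 0 := by rw [sq, mul_assoc, hv0, mul_zero]
        simp [hz]
      · refine tendsto_const_nhds.congr' ?_
        have h1 : Tendsto (fun n : ℕ => 2 * (1 / ((n : ℝ) + 1))) atTop (nhds 0) := by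
          simpa using (tendsto_one_div_add_atTop_nhds_zero_nat (𝕜 := ℝ)).const_mul 2
        filter_upwards [h1.eventually (gt_mem_nhds (abs_pos.2 hgx))] with n hn
        rw [hho n (g x) hn.le, one_mul]
  exact le_of_tendsto (ENNReal.Tendsto.const_mul hlim (Or.inl hN0)) (Eventually.of_forall hstep)
end
end
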